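/- arXiv:math/0512366 — 2 statements merged into one kernel-verified Lean document; each statement's English description precedes it below -/
import Mathlib

section
/- In S_n, the linear span of the elements v_I := Σ_{Pe(π) = I} π (over all interior peak sets I) is closed under multiplication in the group algebra; explicitly, v_A v_B = Σ_C c_{A,B}^C v_C where, for any fixed π with Pe(π) = C, c_{A,B}^C equals the number of pairs (σ,τ) with Pe(σ) = B, Pe(τ) = A, and στ = π. In particular, the count #{(σ,τ) : στ = π, Pe(τ) = A, Pe(σ) = B} depends only on Pe(π), not on π itself. -/
/-- A permutation of `{1,…,n}`, modeled as a permutation of `ℕ` fixing `0` and all `i > n`. -/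
def IsSn (n : ℕ) (π : Equiv.Perm ℕ) : Prop := ∀ i : ℕ, i = 0 ∨ n < i → π i = i

/-- The interior peak set `Pe(π) = {i ∈ [2,n-1] : π(i-1) < π(i) > π(i+1)}`. -/
def intPeaks (n : ℕ) (π : Equiv.Perm ℕ) : Finset ℕ :=
  (Finset.Icc 2 (n - 1)).filter fun i => π (i - 1) < π i ∧ π (i + 1) < π i

/-- `v_I = Σ_{π ∈ S_n, Pe(π) = I} π` in the group algebra `ℤ[S_n]`. -/
noncomputable def vI (n : ℕ) (I : Finset ℕ) : MonoidAlgebra ℤ (Equiv.Perm ℕ) :=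
  ∑ᶠ π ∈ {π : Equiv.Perm ℕ | IsSn n π ∧ intPeaks n π = I}, MonoidAlgebra.single π (1 : ℤ)


/-- all the elements of `S_n`, as a finite set -/
lemma isSn_finite (n : ℕ) : {π : Equiv.Perm ℕ | IsSn n π}.Finite := by
  have h : Finite {f : Equiv.Perm ℕ // ∀ a, ¬ (a ∈ Finset.Icc 1 n) → f a = a} :=
    Finite.of_equiv _ (Equiv.Perm.subtypeEquivSubtypePerm (fun a => a ∈ Finset.Icc 1 n))
  refine Set.Finite.subset (Set.finite_coe_iff.1 h :
    {f : Equiv.Perm ℕ | ∀ a, ¬ (a ∈ Finset.Icc 1 n) → f a = a}.Finite) ?_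
  intro π hπ a ha
  apply hπ
  simp at ha
  omega

noncomputable def snFin (n : ℕ) : Finset (Equiv.Perm ℕ) := (isSn_finite n).toFinset

lemma mem_snFin {n : ℕ} {π : Equiv.Perm ℕ} : π ∈ snFin n ↔ IsSn n π := by
  simp [snFin]

lemma IsSn.mul {n : ℕ} {π τ : Equiv.Perm ℕ} (h : IsSn n π) (h' : IsSn n τ) : IsSn n (π * τ) := by
  intro i hi
  rw [Equiv.Perm.mul_apply, h' i hi, h i hi]

lemma IsSn.inv {n : ℕ} {π : Equiv.Perm ℕ} (h : IsSn n π) : IsSn n π⁻¹ := by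
  intro i hi
  rw [Equiv.Perm.inv_eq_iff_eq, h i hi]

lemma IsSn.mem {n : ℕ} {π : Equiv.Perm ℕ} (h : IsSn n π) {i : ℕ} (hi : i ∈ Finset.Icc 1 n) :
    π i ∈ Finset.Icc 1 n := by
  simp only [Finset.mem_Icc] at *
  by_contra hc
  have h1 : π (π i) = π i := h (π i) (by omega)
  have h2 := π.injective h1
  omega

/-- sign set `s` compatible with the sequence `u` along the adjacent pairs in `E` -/
def Compat (E : Finset ℕ) (u : ℕ → ℤ) (s : Finset ℕ) : Prop :=
  ∀ i ∈ E, (u i < u (i + 1) → i + 1 ∈ s) ∧ (u (i + 1) < u i → i ∉ s)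

/-- no interior peak `p` of `π` with `p-1, p` both in `E` -/
def NoPk (n : ℕ) (E : Finset ℕ) (π : Equiv.Perm ℕ) : Prop :=
  ∀ p ∈ intPeaks n π, ¬ (p - 1 ∈ E ∧ p ∈ E)

open Classical in
lemma card_compat (n : ℕ) (E : Finset ℕ) (hE : E ⊆ Finset.Icc 1 (n - 1)) (π : Equiv.Perm ℕ) :
    (((Finset.Icc 1 n).powerset).filter (fun s => Compat E (fun i => (π i : ℤ)) s)).card
      = if NoPk n E π then 2 ^ (n - E.card) else 0 := by
  have hE' : ∀ i ∈ E, 1 ≤ i ∧ i + 1 ≤ n := by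
    intro i hi
    have := Finset.mem_Icc.1 (hE hi)
    omega
  split_ifs with h
  · set U := (E.filter (fun i => π i < π (i + 1))).image (· + 1) with hU
    set L := E.filter (fun i => π (i + 1) < π i) with hL
    have hUL : Disjoint U L := by
      rw [Finset.disjoint_left]
      intro p hp hp'
      simp only [hU, hL, Finset.mem_image, Finset.mem_filter] at hp hp'
      obtain ⟨i, ⟨hi, hlt⟩, rfl⟩ := hp
      refine h (i + 1) ?_ ⟨by simpa using hi, hp'.1⟩
      have h1 := hE' _ hi
      have h2 := hE' _ hp'.1
      simp only [intPeaks, Finset.mem_filter, Finset.mem_Icc]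
      refine ⟨by omega, by simpa using hlt, hp'.2⟩
    have hUn : U ⊆ Finset.Icc 1 n := by
      intro p hp
      simp only [hU, Finset.mem_image, Finset.mem_filter] at hp
      obtain ⟨i, ⟨hi, hlt⟩, rfl⟩ := hp
      have h1 := hE' _ hi
      simp; omega
    have hLn : L ⊆ Finset.Icc 1 n := by
      intro p hp
      have h1 := hE' _ (Finset.mem_filter.1 hp).1
      simp; omega
    have hcard : U.card + L.card = E.card := by
      rw [hU, Finset.card_image_of_injective _ (add_left_injective 1), hL]
      rw [← Finset.card_filter_add_card_filter_not (s := E) (fun i => π i < π (i + 1))]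
      congr 2
      apply Finset.filter_congr
      intro i _
      have : π (i + 1) ≠ π i := fun h => by have := π.injective h; omega
      omega
    have hset : (((Finset.Icc 1 n).powerset).filter (fun s => Compat E (fun i => (π i : ℤ)) s))
        = Finset.Icc U (Finset.Icc 1 n \ L) := by
      ext s
      simp only [Finset.mem_filter, Finset.mem_powerset, Finset.mem_Icc]
      constructor
      · rintro ⟨hs, hc⟩
        constructor
        · intro p hp
          simp only [hU, Finset.mem_image, Finset.mem_filter] at hp
          obtain ⟨i, ⟨hi, hlt⟩, rfl⟩ := hp
          exact (hc i hi).1 (Int.ofNat_lt.2 hlt)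
        · intro p hp
          refine Finset.mem_sdiff.2 ⟨hs hp, fun hl => ?_⟩
          obtain ⟨h1, h2⟩ := Finset.mem_filter.1 hl
          exact (hc p h1).2 (Int.ofNat_lt.2 h2) hp
      · rintro ⟨h1, h2⟩
        refine ⟨h2.trans Finset.sdiff_subset, fun i hi => ⟨fun hlt => h1 ?_, fun hlt hs => ?_⟩⟩
        · exact Finset.mem_image.2 ⟨i, Finset.mem_filter.2 ⟨hi, Int.ofNat_lt.1 hlt⟩, rfl⟩
        · exact (Finset.mem_sdiff.1 (h2 hs)).2 (Finset.mem_filter.2 ⟨hi, Int.ofNat_lt.1 hlt⟩)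
    rw [hset, Finset.card_Icc_finset, Finset.card_sdiff_of_subset hLn, Nat.card_Icc]
    · congr 1; omega
    · intro p hp
      exact Finset.mem_sdiff.2 ⟨hUn hp, Finset.disjoint_left.1 hUL hp⟩
  · rw [Finset.card_eq_zero, Finset.filter_eq_empty_iff]
    intro s _ hc
    apply h
    rintro p hp ⟨h1, h2⟩
    simp only [intPeaks, Finset.mem_filter, Finset.mem_Icc] at hp
    have e : p - 1 + 1 = p := by omega
    have := (hc _ h1).1 (by rw [e]; exact Int.ofNat_lt.2 hp.2.1)
    rw [e] at this
    exact (hc _ h2).2 (Int.ofNat_lt.2 hp.2.2) this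

/-- integer sort key -/
def skey (n : ℕ) (c : ℕ → ℕ) (s : Finset ℕ) (π : ℕ → ℕ) (i : ℕ) : ℤ :=
  (c i : ℤ) * (2 * n + 1) + (if i ∈ s then (π i : ℤ) else - (π i : ℤ))

lemma skey_lt_of_lt {n : ℕ} {c : ℕ → ℕ} {s : Finset ℕ} {π : ℕ → ℕ} {i j : ℕ}
    (hi : π i ≤ n) (hj : π j ≤ n) (h : c i < c j) : skey n c s π i < skey n c s π j := by
  unfold skey
  have h1 : ((c i : ℤ) + 1) * (2 * n + 1) ≤ c j * (2 * n + 1) := by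
    apply mul_le_mul_of_nonneg_right <;> omega
  have h2 : ((c i : ℤ) + 1) * (2 * n + 1) = c i * (2 * n + 1) + (2 * n + 1) := by ring
  split_ifs <;> omega

lemma skey_lt_of_eq {n : ℕ} {c : ℕ → ℕ} {s : Finset ℕ} {π : ℕ → ℕ} {i j : ℕ}
    (h : c i = c j) : skey n c s π i < skey n c s π j ↔
      (if i ∈ s then (π i : ℤ) else - (π i : ℤ)) < (if j ∈ s then (π j : ℤ) else - (π j : ℤ)) := by
  unfold skey
  rw [h]
  omega

lemma skey_inj {n : ℕ} {c : ℕ → ℕ} {s : Finset ℕ} {π : Equiv.Perm ℕ} (hπ : IsSn n π) {i j : ℕ}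
    (hi : i ∈ Finset.Icc 1 n) (hj : j ∈ Finset.Icc 1 n) (h : skey n c s π i = skey n c s π j) :
    i = j := by
  have h1 := Finset.mem_Icc.1 (hπ.mem hi)
  have h2 := Finset.mem_Icc.1 (hπ.mem hj)
  rcases lt_trichotomy (c i) (c j) with hc | hc | hc
  · have := skey_lt_of_lt (s := s) h1.2 h2.2 hc; omega
  · apply π.injective
    unfold skey at h
    rw [hc] at h
    split_ifs at h <;> omega
  · have := skey_lt_of_lt (s := s) h2.2 h1.2 hc; omega

lemma rearr {n : ℕ} {b : ℕ → ℕ} (hb : Monotone b) {ρ : Equiv.Perm ℕ} (hρ : IsSn n ρ)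
    (hm : ∀ i ∈ Finset.Icc 1 n, ∀ j ∈ Finset.Icc 1 n, i ≤ j → b (ρ i) ≤ b (ρ j)) (i : ℕ) :
    b (ρ i) = b i := by
  by_cases hi : i ∈ Finset.Icc 1 n
  · have hi' := Finset.mem_Icc.1 hi
    apply le_antisymm
    · have : ∃ j ∈ Finset.Icc i n, ρ j ≤ i := by
        by_contra! hc
        have := Finset.card_le_card_of_injOn (s := Finset.Icc i n) (t := Finset.Icc (i + 1) n) ρ
          (fun j hj => by
            have h1 := hc j hj
            have h2 := Finset.mem_Icc.1 hj
            have h3 := Finset.mem_Icc.1 (hρ.mem (i := j) (by simp; omega))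
            simp; omega) (ρ.injective.injOn)
        simp at this
        omega
      obtain ⟨j, hj, hji⟩ := this
      have hj' := Finset.mem_Icc.1 hj
      exact (hm i hi j (by simp; omega) hj'.1).trans (hb hji)
    · have : ∃ j ∈ Finset.Icc 1 i, i ≤ ρ j := by
        by_contra! hc
        have := Finset.card_le_card_of_injOn (s := Finset.Icc 1 i) (t := Finset.Icc 1 (i - 1)) ρ
          (fun j hj => by
            have h1 := hc j hj
            have h2 := Finset.mem_Icc.1 hj
            have h3 := Finset.mem_Icc.1 (hρ.mem (i := j) (by simp; omega))
            simp; omega) (ρ.injective.injOn)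
        simp at this
        omega
      obtain ⟨j, hj, hji⟩ := this
      have hj' := Finset.mem_Icc.1 hj
      exact (hb hji).trans (hm j (by simp; omega) i hi hj'.2)
  · rw [hρ i (by simp at hi; omega)]

lemma exists_rank (n : ℕ) (k : ℕ → ℤ)
    (hk : ∀ i ∈ Finset.Icc 1 n, ∀ j ∈ Finset.Icc 1 n, k i = k j → i = j) :
    ∃ τ : Equiv.Perm ℕ, IsSn n τ ∧
      ∀ i ∈ Finset.Icc 1 n, ∀ j ∈ Finset.Icc 1 n, (τ i < τ j ↔ k i < k j) := by
  classical
  set r : ℕ → ℕ := fun i => ((Finset.Icc 1 n).filter (fun j => k j ≤ k i)).card with hr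
  have hlt : ∀ i ∈ Finset.Icc 1 n, ∀ j ∈ Finset.Icc 1 n, k i < k j → r i < r j := by
    intro i hi j hj h
    apply Finset.card_lt_card
    rw [Finset.ssubset_iff_of_subset]
    · exact ⟨j, by simp at hj ⊢; omega, by simp; omega⟩
    · intro x hx
      simp at hx ⊢; omega
  have hiff : ∀ i ∈ Finset.Icc 1 n, ∀ j ∈ Finset.Icc 1 n, (r i < r j ↔ k i < k j) := by
    intro i hi j hj
    refine ⟨fun h => ?_, hlt i hi j hj⟩
    by_contra hc
    rcases eq_or_lt_of_le (not_lt.1 hc) with he | hl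
    · have := hk _ hj _ hi he
      subst this; omega
    · have := hlt j hj i hi hl; omega
  have hmem : ∀ i ∈ Finset.Icc 1 n, r i ∈ Finset.Icc 1 n := by
    intro i hi
    rw [Finset.mem_Icc]
    constructor
    · apply Finset.card_pos.2
      exact ⟨i, by simp at hi ⊢; omega⟩
    · exact (Finset.card_filter_le _ _).trans (by simp)
  have hinj : ∀ i ∈ Finset.Icc 1 n, ∀ j ∈ Finset.Icc 1 n, r i = r j → i = j := by
    intro i hi j hj h
    apply hk i hi j hj
    have h1 := hiff i hi j hj
    have h2 := hiff j hj i hi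
    omega
  have hsurj : ∀ y ∈ Finset.Icc 1 n, ∃ x ∈ Finset.Icc 1 n, r x = y := by
    have := Finset.surjOn_of_injOn_of_card_le (s := Finset.Icc 1 n) (t := Finset.Icc 1 n) r
      hmem (fun i hi j hj => hinj i hi j hj) le_rfl
    intro y hy
    obtain ⟨x, hx, h⟩ := this hy
    exact ⟨x, hx, h⟩
  set f : ℕ → ℕ := fun i => if i ∈ Finset.Icc 1 n then r i else i with hf
  have hfb : Function.Bijective f := by
    constructor
    · intro i j h
      simp only [hf] at h
      split_ifs at h with h1 h2 h2
      · exact hinj i h1 j h2 h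
      · exact absurd (h ▸ hmem i h1) h2
      · exact absurd (h ▸ hmem j h2) h1
      · exact h
    · intro y
      by_cases hy : y ∈ Finset.Icc 1 n
      · obtain ⟨x, hx, h⟩ := hsurj y hy
        exact ⟨x, by simp only [hf]; rw [if_pos hx, h]⟩
      · exact ⟨y, by simp only [hf]; rw [if_neg hy]⟩
  refine ⟨Equiv.ofBijective f hfb, ?_, ?_⟩
  · intro i hi
    simp only [Equiv.ofBijective_apply, hf]
    rw [if_neg (by simp; omega)]
  · intro i hi j hj
    simp only [Equiv.ofBijective_apply, hf]
    rw [if_pos hi, if_pos hj, hiff i hi j hj]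

/-- Uniqueness of the sorting permutation. -/
lemma rank_unique {n : ℕ} {k : ℕ → ℤ} {τ τ' : Equiv.Perm ℕ} (h : IsSn n τ) (h' : IsSn n τ')
    (hk : ∀ i ∈ Finset.Icc 1 n, ∀ j ∈ Finset.Icc 1 n, (τ i < τ j ↔ k i < k j))
    (hk' : ∀ i ∈ Finset.Icc 1 n, ∀ j ∈ Finset.Icc 1 n, (τ' i < τ' j ↔ k i < k j)) : τ = τ' := by
  have hρ : IsSn n (τ' * τ⁻¹) := h'.mul h.inv
  have key := rearr (b := id) monotone_id hρ (by
    intro i hi j hj hij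
    simp only [id, Equiv.Perm.mul_apply]
    by_contra hc
    push Not at hc
    rw [hk' _ (h.inv.mem hj) _ (h.inv.mem hi), ← hk _ (h.inv.mem hj) _ (h.inv.mem hi)] at hc
    simp at hc
    omega)
  ext i
  have := key (τ i)
  simp at this
  exact this.symm

lemma compat_iff_key {n : ℕ} {b : ℕ → ℕ} (hb : Monotone b) {E : Finset ℕ}
    (hE : ∀ p, p ∈ E ↔ p ∈ Finset.Icc 1 (n - 1) ∧ b p = b (p + 1))
    {σ : Equiv.Perm ℕ} (hσ : IsSn n σ) (t : Finset ℕ) :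
    Compat E (fun i => (σ i : ℤ)) t ↔
      ∀ p ∈ Finset.Icc 1 n, ∀ q ∈ Finset.Icc 1 n, (p < q ↔ skey n b t σ p < skey n b t σ q) := by
  have hadj : ∀ p, 1 ≤ p → p + 1 ≤ n →
      (skey n b t σ p < skey n b t σ (p + 1) ↔
        (p ∈ E → (((σ p : ℤ) < σ (p + 1) → p + 1 ∈ t) ∧ ((σ (p + 1) : ℤ) < σ p → p ∉ t)))) := by
    intro p h1 h2
    have m1 := Finset.mem_Icc.1 (hσ.mem (i := p) (by simp; omega))
    have m2 := Finset.mem_Icc.1 (hσ.mem (i := p + 1) (by simp; omega))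
    by_cases hp : p ∈ E
    · have hne : σ p ≠ σ (p + 1) := fun h => by have := σ.injective h; omega
      rw [skey_lt_of_eq ((hE p).1 hp).2]
      simp only [hp, true_imp_iff]
      by_cases c1 : p ∈ t <;> by_cases c2 : p + 1 ∈ t <;> simp [c1, c2] <;> omega
    · simp only [hp, false_imp_iff, iff_true]
      apply skey_lt_of_lt m1.2 m2.2
      apply lt_of_le_of_ne (hb (Nat.le_succ p))
      intro h
      exact hp ((hE p).2 ⟨by simp; omega, h⟩)
  constructor
  · intro hc
    have hmono : StrictMonoOn (skey n b t σ) (Set.Icc 1 n) := by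
      apply strictMonoOn_of_lt_add_one Set.ordConnected_Icc
      intro a _ ha ha'
      rw [hadj a ha.1 ha'.2]
      exact fun h => hc a h
    intro p hp q hq
    rw [hmono.lt_iff_lt (by simpa using hp) (by simpa using hq)]
  · intro h i hi
    have := (hE i).1 hi
    have hi' := Finset.mem_Icc.1 this.1
    exact (hadj i hi'.1 (by omega)).1
      ((h i (by simp; omega) (i + 1) (by simp; omega)).1 (by omega)) hi

lemma skey_comp (n : ℕ) (b : ℕ → ℕ) (t : Finset ℕ) (π τ : Equiv.Perm ℕ) (i : ℕ) :
    skey n (b ∘ τ) (t.map τ.symm.toEmbedding) π i = skey n b t (π * τ⁻¹ : Equiv.Perm ℕ) (τ i) := by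
  unfold skey
  simp [Finset.mem_map_equiv]

lemma compat_congr {n : ℕ} {E : Finset ℕ} (hE : E ⊆ Finset.Icc 1 (n - 1)) {u v : ℕ → ℤ}
    (h : ∀ i ∈ Finset.Icc 1 n, ∀ j ∈ Finset.Icc 1 n, (u i < u j ↔ v i < v j)) (s : Finset ℕ) :
    Compat E u s ↔ Compat E v s := by
  unfold Compat
  refine forall₂_congr fun i hi => ?_
  have := Finset.mem_Icc.1 (hE hi)
  have h1 : i ∈ Finset.Icc 1 n := by simp; omega
  have h2 : i + 1 ∈ Finset.Icc 1 n := by simp; omega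
  rw [h _ h1 _ h2, h _ h2 _ h1]

open Classical in
lemma main_bij (n : ℕ) (b : ℕ → ℕ) (hb : Monotone b) (E₁ E₂ : Finset ℕ)
    (hE₁ : E₁ ⊆ Finset.Icc 1 (n - 1))
    (hE₂ : ∀ p, p ∈ E₂ ↔ p ∈ Finset.Icc 1 (n - 1) ∧ b p = b (p + 1))
    (π : Equiv.Perm ℕ) (hπ : IsSn n π) :
    ((snFin n ×ˢ ((Finset.Icc 1 n).powerset ×ˢ (Finset.Icc 1 n).powerset)).filter
      (fun x => Compat E₂ (fun i => ((π * x.1⁻¹ : Equiv.Perm ℕ) i : ℤ)) x.2.1 ∧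
        Compat E₁ (fun i => (x.1 i : ℤ)) x.2.2)).card
    = ((((snFin n).image (fun τ : Equiv.Perm ℕ => b ∘ τ)) ×ˢ
        ((Finset.Icc 1 n).powerset ×ˢ (Finset.Icc 1 n).powerset)).filter
      (fun x => Compat E₁ (skey n x.1 x.2.1 π) x.2.2)).card := by
  have tr : ∀ (τ : Equiv.Perm ℕ) (t : Finset ℕ), IsSn n τ →
      Compat E₂ (fun i => ((π * τ⁻¹ : Equiv.Perm ℕ) i : ℤ)) t →
      ∀ i ∈ Finset.Icc 1 n, ∀ j ∈ Finset.Icc 1 n, (τ i < τ j ↔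
        skey n (b ∘ τ) (t.map τ.symm.toEmbedding) π i
          < skey n (b ∘ τ) (t.map τ.symm.toEmbedding) π j) := by
    intro τ t hτ hc i hi j hj
    rw [skey_comp, skey_comp]
    exact (compat_iff_key hb hE₂ (hπ.mul hτ.inv) t).1 hc _ (hτ.mem hi) _ (hτ.mem hj)
  apply Finset.card_bij (fun x _ => (b ∘ x.1, x.2.1.map x.1.symm.toEmbedding, x.2.2))
  · rintro ⟨τ, t, h⟩ hx
    simp only [Finset.mem_filter, Finset.mem_product, Finset.mem_powerset, mem_snFin,
      Finset.mem_image] at hx ⊢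
    obtain ⟨⟨hτ, ht, hh⟩, hc, hc'⟩ := hx
    refine ⟨⟨⟨τ, hτ, rfl⟩, ?_, hh⟩, ?_⟩
    · intro i hi
      obtain ⟨j, hj, rfl⟩ := Finset.mem_map.1 hi
      exact hτ.inv.mem (ht hj)
    · rw [← compat_congr hE₁ (u := fun i => (τ i : ℤ))]
      · exact hc'
      · intro i hi j hj
        rw [Int.ofNat_lt]
        exact tr τ t hτ hc i hi j hj
  · rintro ⟨τ, t, h⟩ hx ⟨τ', t', h'⟩ hx' heq
    simp only [Finset.mem_filter, Finset.mem_product, Finset.mem_powerset, mem_snFin] at hx hx'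
    simp only [Prod.mk.injEq] at heq
    obtain ⟨e1, e2, e3⟩ := heq
    have k1 := tr τ t hx.1.1 hx.2.1
    have k2 := tr τ' t' hx'.1.1 hx'.2.1
    rw [e1, e2] at k1
    have := rank_unique hx.1.1 hx'.1.1 k1 k2
    subst this
    rw [Finset.map_inj] at e2
    rw [e2, e3]
  · rintro ⟨c, s, h⟩ hx
    simp only [Finset.mem_filter, Finset.mem_product, Finset.mem_powerset, mem_snFin,
      Finset.mem_image] at hx
    obtain ⟨⟨⟨τ₀, hτ₀, rfl⟩, hs, hh⟩, hc⟩ := hx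
    obtain ⟨τ, hτ, hk⟩ := exists_rank n (skey n (b ∘ τ₀) s π)
      (fun i hi j hj he => skey_inj hπ hi hj he)
    have hbτ : b ∘ τ = b ∘ τ₀ := by
      have hr := rearr hb (hτ₀.mul hτ.inv) (by
        intro i hi j hj hij
        simp only [Equiv.Perm.mul_apply]
        by_contra hc
        push Not at hc
        have hi' := hτ.inv.mem hi
        have hj' := hτ.inv.mem hj
        have := (hk _ hj' _ hi').2 (skey_lt_of_lt (Finset.mem_Icc.1 (hπ.mem hj')).2
          (Finset.mem_Icc.1 (hπ.mem hi')).2 hc)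
        simp at this
        omega)
      funext i
      have := hr (τ i)
      simp at this
      exact this.symm
    have hst : (s.map τ.toEmbedding).map τ.symm.toEmbedding = s := by
      ext i; simp [Finset.mem_map_equiv]
    refine ⟨(τ, s.map τ.toEmbedding, h), ?_, ?_⟩
    · simp only [Finset.mem_filter, Finset.mem_product, Finset.mem_powerset, mem_snFin]
      refine ⟨⟨hτ, ?_, hh⟩, ?_, ?_⟩
      · intro i hi
        obtain ⟨j, hj, rfl⟩ := Finset.mem_map.1 hi
        exact hτ.mem (hs hj)
      · rw [compat_iff_key hb hE₂ (hπ.mul hτ.inv)]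
        intro p hp q hq
        have := hk _ (hτ.inv.mem hp) _ (hτ.inv.mem hq)
        rw [← hbτ] at this
        conv at this => rhs; rw [← hst]
        rw [skey_comp, skey_comp] at this
        simpa using this
      · rw [compat_congr hE₁ (v := skey n (b ∘ τ₀) s π)]
        · exact hc
        · intro i hi j hj
          rw [Int.ofNat_lt]
          exact hk i hi j hj
    · simp only [hst, hbτ]

/-- shape condition on `(c,h)` -/
def Shape (E : Finset ℕ) (c : ℕ → ℕ) (h : Finset ℕ) : Prop :=
  ∀ i ∈ E, (c i < c (i + 1) → i + 1 ∈ h) ∧ (c (i + 1) < c i → i ∉ h) ∧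
    (c i = c (i + 1) → i ∈ h → i + 1 ∈ h)

open Classical in
/-- the pairs inside one cell -/
noncomputable def cellE (E : Finset ℕ) (c : ℕ → ℕ) (h : Finset ℕ) : Finset ℕ :=
  E.filter (fun i => c i = c (i + 1) ∧ (i ∈ h ↔ i + 1 ∈ h))

lemma compat_skey_iff {n : ℕ} {E : Finset ℕ} (hE : E ⊆ Finset.Icc 1 (n - 1)) (c : ℕ → ℕ)
    {s h : Finset ℕ} {π : Equiv.Perm ℕ} (hπ : IsSn n π) :
    Compat E (skey n c s π) h ↔ Shape E c h ∧
      Compat (cellE E c h) (fun i => (π i : ℤ)) (Finset.Icc 1 n \ symmDiff s h) := by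
  have key : ∀ i ∈ E, ((skey n c s π i < skey n c s π (i + 1) → i + 1 ∈ h) ∧
      (skey n c s π (i + 1) < skey n c s π i → i ∉ h)) ↔
      (((c i < c (i + 1) → i + 1 ∈ h) ∧ (c (i + 1) < c i → i ∉ h) ∧
        (c i = c (i + 1) → i ∈ h → i + 1 ∈ h)) ∧
       ((c i = c (i + 1) ∧ (i ∈ h ↔ i + 1 ∈ h)) →
        (((π i : ℤ) < π (i + 1) → (i + 1 ∈ s ↔ i + 1 ∈ h)) ∧
          ((π (i + 1) : ℤ) < π i → ¬ (i ∈ s ↔ i ∈ h))))) := by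
    intro i hi
    have hi' := Finset.mem_Icc.1 (hE hi)
    have m1 := Finset.mem_Icc.1 (hπ.mem (i := i) (by simp; omega))
    have m2 := Finset.mem_Icc.1 (hπ.mem (i := i + 1) (by simp; omega))
    have hne : π i ≠ π (i + 1) := fun h => by have := π.injective h; omega
    rcases lt_trichotomy (c i) (c (i + 1)) with hc | hc | hc
    · have h1 := skey_lt_of_lt (s := s) m1.2 m2.2 hc
      have h2 := hc.ne
      have h3 := hc.le.not_gt
      simp [hc, h1, h2, h3, h1.le.not_gt]
    · rw [skey_lt_of_eq hc, skey_lt_of_eq hc.symm]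
      by_cases c1 : i ∈ s <;> by_cases c2 : i + 1 ∈ s <;> by_cases c3 : i ∈ h <;>
        by_cases c4 : i + 1 ∈ h <;> simp [c1, c2, c3, c4, hc] <;> omega
    · have h1 := skey_lt_of_lt (s := s) m2.2 m1.2 hc
      have h2 := hc.ne'
      have h3 := hc.le.not_gt
      simp [hc, h1, h2, h3, h1.le.not_gt]
  have hmem : ∀ i ∈ Finset.Icc 1 n, (i ∈ Finset.Icc 1 n \ symmDiff s h ↔ (i ∈ s ↔ i ∈ h)) := by
    intro i hi
    simp only [Finset.mem_sdiff, hi, Finset.mem_symmDiff]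
    tauto
  constructor
  · intro hc
    refine ⟨fun i hi => ((key i hi).1 (hc i hi)).1, fun i hi => ?_⟩
    obtain ⟨hi1, hi2⟩ := Finset.mem_filter.1 hi
    have hi' := Finset.mem_Icc.1 (hE hi1)
    rw [hmem i (by simp; omega), hmem (i + 1) (by simp; omega)]
    exact ((key i hi1).1 (hc i hi1)).2 hi2
  · rintro ⟨hs, hc⟩ i hi
    refine (key i hi).2 ⟨hs i hi, fun hi2 => ?_⟩
    have hi' := Finset.mem_Icc.1 (hE hi)
    rw [← hmem i (by simp; omega), ← hmem (i + 1) (by simp; omega)]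
    exact hc i (Finset.mem_filter.2 ⟨hi, hi2⟩)

open Classical in
lemma card_skey (n : ℕ) {E : Finset ℕ} (hE : E ⊆ Finset.Icc 1 (n - 1)) (c : ℕ → ℕ)
    {h : Finset ℕ} (hh : h ⊆ Finset.Icc 1 n) {π : Equiv.Perm ℕ} (hπ : IsSn n π) :
    ((Finset.Icc 1 n).powerset.filter (fun s => Compat E (skey n c s π) h)).card
      = if Shape E c h ∧ NoPk n (cellE E c h) π then 2 ^ (n - (cellE E c h).card) else 0 := by
  by_cases hS : Shape E c h
  · have h1 := card_compat n (cellE E c h) ((Finset.filter_subset _ _).trans hE) π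
    simp only [hS, true_and]
    rw [← h1]
    have inv : ∀ s ⊆ Finset.Icc 1 n,
        Finset.Icc 1 n \ symmDiff (Finset.Icc 1 n \ symmDiff s h) h = s := by
      intro s hs
      ext i
      have := @hs i
      have := @hh i
      simp only [Finset.mem_sdiff, Finset.mem_symmDiff]
      tauto
    apply Finset.card_nbij' (fun s => Finset.Icc 1 n \ symmDiff s h)
      (fun s => Finset.Icc 1 n \ symmDiff s h)
    · intro s hs
      simp only [Finset.coe_filter, Finset.mem_powerset, Set.mem_ofPred_eq] at hs ⊢
      exact ⟨Finset.sdiff_subset, ((compat_skey_iff hE c hπ).1 hs.2).2⟩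
    · intro s hs
      simp only [Finset.coe_filter, Finset.mem_powerset, Set.mem_ofPred_eq] at hs ⊢
      refine ⟨Finset.sdiff_subset, (compat_skey_iff hE c hπ).2 ⟨hS, ?_⟩⟩
      rw [inv s hs.1]
      exact hs.2
    · intro s hs
      exact inv s (Finset.mem_powerset.1 (Finset.mem_filter.1 hs).1)
    · intro s hs
      exact inv s (Finset.mem_powerset.1 (Finset.mem_filter.1 hs).1)
  · simp only [hS, false_and, if_false, Finset.card_eq_zero, Finset.filter_eq_empty_iff]
    intro s _ hc
    exact hS ((compat_skey_iff hE c hπ).1 hc).1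

open Classical in
lemma sum_invariant (n : ℕ) {E₁ E₂ : Finset ℕ} (hE₁ : E₁ ⊆ Finset.Icc 1 (n - 1))
    (hE₂ : E₂ ⊆ Finset.Icc 1 (n - 1)) {π π' : Equiv.Perm ℕ} (hπ : IsSn n π) (hπ' : IsSn n π')
    (hpk : intPeaks n π = intPeaks n π') :
    (∑ τ ∈ snFin n, (if NoPk n E₁ τ then (1 : ℤ) else 0) *
        (if NoPk n E₂ (π * τ⁻¹) then (1 : ℤ) else 0))
    = ∑ τ ∈ snFin n, (if NoPk n E₁ τ then (1 : ℤ) else 0) *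
        (if NoPk n E₂ (π' * τ⁻¹) then (1 : ℤ) else 0) := by
  set b : ℕ → ℕ := fun p => ((Finset.Icc 1 (n - 1) \ E₂).filter (· < p)).card with hb
  have hbm : Monotone b := by
    intro p q hpq
    apply Finset.card_le_card
    intro x hx
    simp only [Finset.mem_filter] at hx ⊢
    exact ⟨hx.1, by omega⟩
  have hbE : ∀ p, p ∈ E₂ ↔ p ∈ Finset.Icc 1 (n - 1) ∧ b p = b (p + 1) := by
    intro p
    constructor
    · intro hp
      refine ⟨hE₂ hp, ?_⟩
      simp only [hb]
      congr 1
      apply Finset.filter_congr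
      intro x hx
      have : x ≠ p := by rintro rfl; exact (Finset.mem_sdiff.1 hx).2 hp
      omega
    · rintro ⟨h1, h2⟩
      by_contra hp
      apply h2.not_lt
      apply Finset.card_lt_card
      rw [Finset.ssubset_iff_of_subset]
      · exact ⟨p, Finset.mem_filter.2 ⟨Finset.mem_sdiff.2 ⟨h1, hp⟩, by omega⟩, by simp⟩
      · intro x hx
        simp only [Finset.mem_filter] at hx ⊢
        exact ⟨hx.1, by omega⟩
  -- the right-hand count only sees the peaks
  have hR : ∀ ρ : Equiv.Perm ℕ, IsSn n ρ →
      ((2 : ℤ) ^ (n - E₁.card) * 2 ^ (n - E₂.card)) *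
      (∑ τ ∈ snFin n, (if NoPk n E₁ τ then (1 : ℤ) else 0) *
        (if NoPk n E₂ (ρ * τ⁻¹) then (1 : ℤ) else 0)) =
      ((∑ c ∈ (snFin n).image (fun τ : Equiv.Perm ℕ => b ∘ τ), ∑ h ∈ (Finset.Icc 1 n).powerset,
        (if Shape E₁ c h ∧ NoPk n (cellE E₁ c h) ρ then 2 ^ (n - (cellE E₁ c h).card) else 0)
          : ℕ) : ℤ) := by
    intro ρ hρ
    have e := main_bij n b hbm E₁ E₂ hE₁ hbE ρ hρ
    have e1 : ((snFin n ×ˢ ((Finset.Icc 1 n).powerset ×ˢ (Finset.Icc 1 n).powerset)).filter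
      (fun x => Compat E₂ (fun i => ((ρ * x.1⁻¹ : Equiv.Perm ℕ) i : ℤ)) x.2.1 ∧
        Compat E₁ (fun i => (x.1 i : ℤ)) x.2.2)).card
        = ∑ τ ∈ snFin n, (if NoPk n E₂ (ρ * τ⁻¹) then 2 ^ (n - E₂.card) else 0) *
          (if NoPk n E₁ τ then 2 ^ (n - E₁.card) else 0) := by
      rw [Finset.card_filter, Finset.sum_product]
      apply Finset.sum_congr rfl
      intro τ _
      rw [← card_compat n E₂ hE₂, ← card_compat n E₁ hE₁, ← Finset.card_product,
        ← Finset.filter_product, Finset.card_filter]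
    have e2 : ((((snFin n).image (fun τ : Equiv.Perm ℕ => b ∘ τ)) ×ˢ
        ((Finset.Icc 1 n).powerset ×ˢ (Finset.Icc 1 n).powerset)).filter
      (fun x => Compat E₁ (skey n x.1 x.2.1 ρ) x.2.2)).card
        = ∑ c ∈ (snFin n).image (fun τ : Equiv.Perm ℕ => b ∘ τ), ∑ h ∈ (Finset.Icc 1 n).powerset,
        (if Shape E₁ c h ∧ NoPk n (cellE E₁ c h) ρ then 2 ^ (n - (cellE E₁ c h).card) else 0) := by
      rw [Finset.card_filter, Finset.sum_product]
      apply Finset.sum_congr rfl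
      intro c _
      rw [Finset.sum_product_right]
      apply Finset.sum_congr rfl
      intro h hh
      rw [← card_skey n hE₁ c (Finset.mem_powerset.1 hh) hρ, Finset.card_filter]
    rw [← e2, ← e, e1]
    push_cast
    rw [Finset.mul_sum]
    apply Finset.sum_congr rfl
    intro τ _
    split_ifs <;> ring
  have h1 := hR π hπ
  have h2 := hR π' hπ'
  have hno : ∀ E, NoPk n E π ↔ NoPk n E π' := by
    intro E
    unfold NoPk
    rw [hpk]
  simp only [hno] at h1
  rw [← h2] at h1
  exact mul_left_cancel₀ (by positivity) h1

open Classical in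
/-- the span of the indicator functions `NoPk n E` -/
noncomputable def wSpan (n : ℕ) : Submodule ℤ (Equiv.Perm ℕ → ℤ) :=
  Submodule.span ℤ {f | ∃ E : Finset ℕ, E ⊆ Finset.Icc 1 (n - 1) ∧
    f = fun τ => if NoPk n E τ then 1 else 0}

lemma intPeaks_subset (n : ℕ) (π : Equiv.Perm ℕ) : intPeaks n π ⊆ Finset.Icc 2 (n - 1) :=
  Finset.filter_subset _ _

lemma intPeaks_sparse (n : ℕ) (π : Equiv.Perm ℕ) : ∀ i ∈ intPeaks n π, i + 1 ∉ intPeaks n π := by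
  intro i hi hi'
  simp only [intPeaks, Finset.mem_filter] at hi hi'
  have h1 := hi.2.2
  have h2 := hi'.2.1
  simp at h2
  omega

lemma measure_lt (n : ℕ) {I J : Finset ℕ} (hI : I ⊆ Finset.Icc 2 (n - 1))
    (hJ : J ⊆ Finset.Icc 2 (n - 1)) (hIs : ∀ i ∈ I, i + 1 ∉ I)
    (hIJ : ∀ i ∈ I, i - 1 ∈ J ∨ i ∈ J) (hne : I ≠ J) :
    ∑ i ∈ I, (n - i) < ∑ i ∈ J, (n - i) := by
  classical
  set r : ℕ → ℕ := fun i => if i ∈ J then i else i - 1 with hr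
  have hrJ : ∀ i ∈ I, r i ∈ J := by
    intro i hi
    simp only [hr]
    split_ifs with h
    · exact h
    · exact (hIJ i hi).resolve_right h
  have hinj : Set.InjOn r I := by
    intro i hi j hj h
    have h1 := Finset.mem_Icc.1 (hI hi)
    have h2 := Finset.mem_Icc.1 (hI hj)
    have h3 := hIs i hi
    have h4 := hIs j hj
    simp only [hr] at h
    split_ifs at h with a1 a2 a2
    · exact h
    · exact absurd (by rw [h, Nat.sub_add_cancel (by omega)]; exact hj) h3
    · exact absurd (by rw [← h, Nat.sub_add_cancel (by omega)]; exact hi) h4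
    · omega
  have hsub : I.image r ⊆ J := by
    intro x hx
    obtain ⟨i, hi, rfl⟩ := Finset.mem_image.1 hx
    exact hrJ i hi
  have hle2 : ∑ i ∈ I.image r, (n - i) ≤ ∑ i ∈ J, (n - i) := Finset.sum_le_sum_of_subset hsub
  rw [Finset.sum_image hinj] at hle2
  have hpt : ∀ i ∈ I, n - i ≤ n - r i := by
    intro i _
    simp only [hr]
    split_ifs <;> omega
  by_cases hall : ∀ i ∈ I, i ∈ J
  · have hss : I ⊂ J := lt_of_le_of_ne hall hne
    obtain ⟨j, hj, hjI⟩ := Finset.exists_of_ssubset hss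
    apply Finset.sum_lt_sum_of_subset hss.1 hj hjI
    · have := Finset.mem_Icc.1 (hJ hj)
      omega
    · intros; omega
  · push Not at hall
    obtain ⟨i, hi, hiJ⟩ := hall
    refine lt_of_lt_of_le (Finset.sum_lt_sum hpt ⟨i, hi, ?_⟩) hle2
    have := Finset.mem_Icc.1 (hI hi)
    simp only [hr]
    rw [if_neg hiJ]
    omega

open Classical in
lemma delta_mem (n : ℕ) : ∀ (m : ℕ) (J : Finset ℕ), ∑ i ∈ J, (n - i) = m →
    (fun τ : Equiv.Perm ℕ => if intPeaks n τ = J then (1 : ℤ) else 0) ∈ wSpan n := by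
  intro m
  induction m using Nat.strong_induction_on with
  | _ m ih =>
  intro J hm
  by_cases hJ : J ⊆ Finset.Icc 2 (n - 1) ∧ ∀ i ∈ J, i + 1 ∉ J
  · obtain ⟨hJ, hJs⟩ := hJ
    set F : Finset (Finset ℕ) := (Finset.Icc 2 (n - 1)).powerset.filter
      (fun I => (∀ i ∈ I, i + 1 ∉ I) ∧ (∀ i ∈ I, i - 1 ∈ J ∨ i ∈ J)) with hF
    have hJF : J ∈ F := by
      simp only [hF, Finset.mem_filter, Finset.mem_powerset]
      exact ⟨hJ, hJs, fun i hi => Or.inr hi⟩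
    have hE : (fun τ : Equiv.Perm ℕ =>
        if NoPk n (Finset.Icc 1 (n - 1) \ J) τ then (1 : ℤ) else 0) ∈ wSpan n :=
      Submodule.subset_span ⟨_, Finset.sdiff_subset, rfl⟩
    have heq : (fun τ : Equiv.Perm ℕ =>
        if NoPk n (Finset.Icc 1 (n - 1) \ J) τ then (1 : ℤ) else 0)
        = ∑ I ∈ F, (fun τ : Equiv.Perm ℕ => if intPeaks n τ = I then (1 : ℤ) else 0) := by
      funext τ
      rw [Finset.sum_apply, Finset.sum_ite_eq]
      have : NoPk n (Finset.Icc 1 (n - 1) \ J) τ ↔ intPeaks n τ ∈ F := by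
        simp only [hF, Finset.mem_filter, Finset.mem_powerset, intPeaks_subset, true_and]
        rw [and_iff_right (intPeaks_sparse n τ)]
        unfold NoPk
        refine forall₂_congr fun p hp => ?_
        have := Finset.mem_Icc.1 (intPeaks_subset n τ hp)
        have m1 : p - 1 ∈ Finset.Icc 1 (n - 1) := by simp; omega
        have m2 : p ∈ Finset.Icc 1 (n - 1) := by simp; omega
        simp only [Finset.mem_sdiff, m1, m2, true_and]
        tauto
      simp only [this]
    rw [← Finset.add_sum_erase F _ hJF] at heq
    have hsum : ∑ I ∈ F.erase J, (fun τ : Equiv.Perm ℕ =>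
        if intPeaks n τ = I then (1 : ℤ) else 0) ∈ wSpan n := by
      apply Submodule.sum_mem
      intro I hI
      obtain ⟨hne, hI⟩ := Finset.mem_erase.1 hI
      simp only [hF, Finset.mem_filter, Finset.mem_powerset] at hI
      exact ih _ (hm ▸ measure_lt n hI.1 hJ hI.2.1 hI.2.2 hne) I rfl
    rw [heq] at hE
    exact (Submodule.add_mem_iff_left _ hsum).1 hE
  · have : (fun τ : Equiv.Perm ℕ => if intPeaks n τ = J then (1 : ℤ) else 0) = 0 := by
      funext τ
      simp only [Pi.zero_apply, ite_eq_right_iff, one_ne_zero, imp_false]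
      rintro rfl
      exact hJ ⟨intPeaks_subset n τ, intPeaks_sparse n τ⟩
    rw [this]
    exact Submodule.zero_mem _

lemma conv_invariant (n : ℕ) {π π' : Equiv.Perm ℕ} (hπ : IsSn n π) (hπ' : IsSn n π')
    (hpk : intPeaks n π = intPeaks n π') (x y : Equiv.Perm ℕ → ℤ) (hx : x ∈ wSpan n)
    (hy : y ∈ wSpan n) :
    ∑ τ ∈ snFin n, x τ * y (π * τ⁻¹) = ∑ τ ∈ snFin n, x τ * y (π' * τ⁻¹) := by
  unfold wSpan at hx hy
  induction hx, hy using Submodule.span_induction₂ with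
  | mem_mem x y hx hy =>
    obtain ⟨E₁, h1, rfl⟩ := hx
    obtain ⟨E₂, h2, rfl⟩ := hy
    exact sum_invariant n h1 h2 hπ hπ' hpk
  | zero_left => simp
  | zero_right => simp
  | add_left x y z _ _ _ h1 h2 =>
    simp only [Pi.add_apply, add_mul, Finset.sum_add_distrib, h1, h2]
  | add_right x y z _ _ _ h1 h2 =>
    simp only [Pi.add_apply, mul_add, Finset.sum_add_distrib, h1, h2]
  | smul_left r x y _ _ h =>
    simp only [Pi.smul_apply, smul_eq_mul, mul_assoc, ← Finset.mul_sum, h]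
  | smul_right r x y _ _ h =>
    simp only [Pi.smul_apply, smul_eq_mul, mul_left_comm _ r, ← Finset.mul_sum, h]

/-- the structure constant -/
def sCount (n : ℕ) (A B : Finset ℕ) (π : Equiv.Perm ℕ) : Finset (Equiv.Perm ℕ) → ℤ :=
  fun S => ∑ τ ∈ S, (if intPeaks n τ = A then (1 : ℤ) else 0) *
    (if intPeaks n (π * τ⁻¹) = B then (1 : ℤ) else 0)

lemma sCount_invariant (n : ℕ) (A B : Finset ℕ) {π π' : Equiv.Perm ℕ} (hπ : IsSn n π)
    (hπ' : IsSn n π') (hpk : intPeaks n π = intPeaks n π') :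
    sCount n A B π (snFin n) = sCount n A B π' (snFin n) := by
  have h1 := delta_mem n _ A rfl
  have h2 := delta_mem n _ B rfl
  have := conv_invariant n hπ hπ' hpk _ _ h1 h2
  unfold sCount
  convert this

lemma natCard_eq (n : ℕ) (A B : Finset ℕ) {π : Equiv.Perm ℕ} (hπ : IsSn n π) :
    ((Nat.card {p : Equiv.Perm ℕ × Equiv.Perm ℕ //
          IsSn n p.1 ∧ IsSn n p.2 ∧ p.1 * p.2 = π ∧
            intPeaks n p.2 = A ∧ intPeaks n p.1 = B} : ℕ) : ℤ) = sCount n A B π (snFin n) := by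
  classical
  rw [Nat.subtype_card (((snFin n).filter (fun τ => intPeaks n τ = A ∧
    intPeaks n (π * τ⁻¹) = B)).image (fun τ => (π * τ⁻¹, τ)))]
  · rw [Finset.card_image_of_injective _ (fun a b h => (Prod.mk.inj h).2), Finset.card_filter]
    unfold sCount
    push_cast
    apply Finset.sum_congr rfl
    intro τ _
    by_cases h1 : intPeaks n τ = A <;> simp [h1]
  · rintro ⟨σ, τ⟩
    simp only [Finset.mem_image, Finset.mem_filter, mem_snFin, Prod.mk.injEq]
    constructor
    · rintro ⟨τ', ⟨h1, h2, h3⟩, rfl, rfl⟩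
      exact ⟨hπ.mul h1.inv, h1, by simp, h2, h3⟩
    · rintro ⟨h1, h2, rfl, h4, h5⟩
      exact ⟨τ, ⟨h2, h4, by simpa using h5⟩, by simp, rfl⟩

lemma vI_eq_sum (n : ℕ) (I : Finset ℕ) :
    vI n I = ∑ π ∈ (snFin n).filter (fun π => intPeaks n π = I),
      MonoidAlgebra.single π (1 : ℤ) := by
  unfold vI
  rw [← finsum_mem_coe_finset]
  have : {π : Equiv.Perm ℕ | IsSn n π ∧ intPeaks n π = I}
      = (((snFin n).filter (fun π => intPeaks n π = I) : Finset (Equiv.Perm ℕ)) :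
        Set (Equiv.Perm ℕ)) := by
    ext π
    simp [mem_snFin]
  rw [this]

lemma vI_mul (n : ℕ) (A B : Finset ℕ) :
    vI n A * vI n B = ∑ π ∈ snFin n,
      sCount n B A π (snFin n) • (MonoidAlgebra.single π (1 : ℤ)) := by
  rw [vI_eq_sum, vI_eq_sum, Finset.sum_mul_sum, Finset.sum_comm]
  simp only [sCount, Finset.sum_smul]
  rw [Finset.sum_comm (s := snFin n), Finset.sum_filter]
  apply Finset.sum_congr rfl
  intro τ hτ
  rw [mem_snFin] at hτ
  split_ifs with h
  · simp only [one_mul, ite_smul, one_smul, zero_smul]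
    rw [Finset.sum_filter]
    apply Finset.sum_bij' (fun σ _ => σ * τ) (fun π _ => π * τ⁻¹)
    · intro σ hσ
      exact mem_snFin.2 ((mem_snFin.1 hσ).mul hτ)
    · intro σ hσ
      exact mem_snFin.2 ((mem_snFin.1 hσ).mul hτ.inv)
    · intros; simp
    · intros; simp
    · intro σ _
      simp [MonoidAlgebra.single_mul_single]
  · simp

/-- The interior peak algebra: the number of factorizations `σ·τ = π` with prescribed
interior peak sets `Pe(τ) = A`, `Pe(σ) = B` depends only on `Pe(π)` (these counts are the
structure constants `c_{A,B}^C`), and consequently the span of the `v_I` is closed under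
multiplication in `ℤ[S_n]`. -/
theorem interior_peak_algebra (n : ℕ) :
    (∀ π π' : Equiv.Perm ℕ, IsSn n π → IsSn n π' → intPeaks n π = intPeaks n π' →
      ∀ A B : Finset ℕ,
        Nat.card {p : Equiv.Perm ℕ × Equiv.Perm ℕ //
          IsSn n p.1 ∧ IsSn n p.2 ∧ p.1 * p.2 = π ∧
            intPeaks n p.2 = A ∧ intPeaks n p.1 = B}
        = Nat.card {p : Equiv.Perm ℕ × Equiv.Perm ℕ //
          IsSn n p.1 ∧ IsSn n p.2 ∧ p.1 * p.2 = π' ∧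
            intPeaks n p.2 = A ∧ intPeaks n p.1 = B}) ∧
    (∀ x ∈ Submodule.span ℤ {v : MonoidAlgebra ℤ (Equiv.Perm ℕ) |
        ∃ I : Finset ℕ, I ⊆ Finset.Icc 2 (n - 1) ∧ (∀ i ∈ I, i + 1 ∉ I) ∧ v = vI n I},
      ∀ y ∈ Submodule.span ℤ {v : MonoidAlgebra ℤ (Equiv.Perm ℕ) |
        ∃ I : Finset ℕ, I ⊆ Finset.Icc 2 (n - 1) ∧ (∀ i ∈ I, i + 1 ∉ I) ∧ v = vI n I},
      x * y ∈ Submodule.span ℤ {v : MonoidAlgebra ℤ (Equiv.Perm ℕ) |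
        ∃ I : Finset ℕ, I ⊆ Finset.Icc 2 (n - 1) ∧ (∀ i ∈ I, i + 1 ∉ I) ∧ v = vI n I}) := by
  refine ⟨?_, ?_⟩
  · intro π π' hπ hπ' hpk A B
    have := sCount_invariant n A B hπ hπ' hpk
    rw [← natCard_eq n A B hπ, ← natCard_eq n A B hπ'] at this
    exact_mod_cast this
  · intro x hx y hy
    induction hx, hy using Submodule.span_induction₂ with
    | mem_mem x y hx hy =>
      obtain ⟨A, -, -, rfl⟩ := hx
      obtain ⟨B, -, -, rfl⟩ := hy
      rw [vI_mul, ← Finset.sum_fiberwise_of_maps_to (t := (snFin n).image (intPeaks n))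
        (g := intPeaks n) (fun π hπ => Finset.mem_image_of_mem _ hπ)]
      apply Submodule.sum_mem
      intro C hC
      obtain ⟨ρ, hρ, rfl⟩ := Finset.mem_image.1 hC
      have : ∑ π ∈ (snFin n).filter (fun π => intPeaks n π = intPeaks n ρ),
          sCount n B A π (snFin n) • (MonoidAlgebra.single π (1 : ℤ))
          = sCount n B A ρ (snFin n) • vI n (intPeaks n ρ) := by
        rw [vI_eq_sum, Finset.smul_sum]
        apply Finset.sum_congr rfl
        intro π hπ
        obtain ⟨h1, h2⟩ := Finset.mem_filter.1 hπ
        rw [sCount_invariant n B A (mem_snFin.1 h1) (mem_snFin.1 hρ) h2]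
      rw [this]
      apply Submodule.smul_mem
      exact Submodule.subset_span ⟨_, intPeaks_subset n ρ, intPeaks_sparse n ρ, rfl⟩
    | zero_left y hy => simp
    | zero_right x hx => simp
    | add_left x y z _ _ _ h1 h2 => rw [add_mul]; exact Submodule.add_mem _ h1 h2
    | add_right x y z _ _ _ h1 h2 => rw [mul_add]; exact Submodule.add_mem _ h1 h2
    | smul_left r x y _ _ h => rw [smul_mul_assoc]; exact Submodule.smul_mem _ r h
    | smul_right r x y _ _ h => rw [mul_smul_comm]; exact Submodule.smul_mem _ r h
end

section
/- In S_n, for all permutations π, π' with the same left peak set lPe(π) = lPe(π'), and all subsets A, B ⊆ [1,n-1], the number of pairs (σ,τ) with στ = π, lPe(τ) = A, lPe(σ) = B equals the corresponding count for π'. Consequently the span of the sums w_I := Σ_{lPe(π)=I} π is a subalgebra of ℤ[S_n] of dimension f_n (Fibonacci). -/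
/-- The left peak set `lPe(π) = {i ∈ [1,n-1] : π(i-1) < π(i) > π(i+1)}`, with `π(0) = 0`. -/
def leftPeaks (n : ℕ) (π : Equiv.Perm ℕ) : Finset ℕ :=
  (Finset.Icc 1 (n - 1)).filter fun i => π (i - 1) < π i ∧ π (i + 1) < π i

/-- `w_I = Σ_{π ∈ S_n, lPe(π) = I} π` in the group algebra `ℤ[S_n]`. -/
noncomputable def wI (n : ℕ) (I : Finset ℕ) : MonoidAlgebra ℤ (Equiv.Perm ℕ) :=
  ∑ᶠ π ∈ {π : Equiv.Perm ℕ | IsSn n π ∧ leftPeaks n π = I}, MonoidAlgebra.single π (1 : ℤ)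

/-- The span of the `w_I`, `I` ranging over left peak sets (sparse subsets of `[1,n-1]`). -/
noncomputable def leftPeakSpan (n : ℕ) : Submodule ℤ (MonoidAlgebra ℤ (Equiv.Perm ℕ)) :=
  Submodule.span ℤ {v : MonoidAlgebra ℤ (Equiv.Perm ℕ) |
    ∃ I : Finset ℕ, I ⊆ Finset.Icc 1 (n - 1) ∧ (∀ i ∈ I, i + 1 ∉ I) ∧ v = wI n I}

namespace LPA
open Equiv Finset

def klt (c p c' p' : ℕ) : Prop :=
  c < c' ∨ (c = c' ∧ ((Even c ∧ p < p') ∨ (¬ Even c ∧ p' < p)))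

instance (c p c' p' : ℕ) : Decidable (klt c p c' p') := by unfold klt; infer_instance

def cl (c : ℕ) : ℕ := (c + 1) / 2

def snake (m c p : ℕ) : ℕ := c * m + (if Even c then p else m - 1 - p)

lemma snake_off_lt {m c p : ℕ} (h : p < m) : (if Even c then p else m - 1 - p) < m := by
  split_ifs <;> omega

lemma snake_div {m c p : ℕ} (h : p < m) : snake m c p / m = c := by
  unfold snake
  have := snake_off_lt (c := c) h
  rw [add_comm, Nat.add_mul_div_right _ _ (by omega), Nat.div_eq_of_lt this, zero_add]

lemma snake_mod {m c p : ℕ} (h : p < m) :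
    snake m c p % m = (if Even c then p else m - 1 - p) := by
  unfold snake
  have := snake_off_lt (c := c) h
  rw [add_comm, Nat.add_mul_mod_self_right, Nat.mod_eq_of_lt this]

lemma klt_iff {m c p c' p' : ℕ} (h : p < m) (h' : p' < m) :
    klt c p c' p' ↔ snake m c p < snake m c' p' := by
  have key : ∀ {c p c' p' : ℕ}, p < m → p' < m → c < c' → snake m c p < snake m c' p' := by
    intro c p c' p' h h' hc
    have h1 := snake_off_lt (c := c) h
    unfold snake
    have : (c + 1) * m ≤ c' * m := Nat.mul_le_mul_right _ hc
    rw [add_mul, one_mul] at this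
    omega
  unfold klt
  rcases lt_trichotomy c c' with hc | hc | hc
  · simp [hc, key h h' hc]
  · subst hc
    unfold snake
    by_cases e : Even c <;> simp [e]
    omega
  · have := key h' h hc
    constructor
    · rintro (h | h) <;> omega
    · intro; omega

lemma snake_inj {m c p c' p' : ℕ} (h : p < m) (h' : p' < m)
    (e : snake m c p = snake m c' p') : c = c' ∧ p = p' := by
  have h1 : c = c' := by rw [← snake_div (c := c) h, e, snake_div h']
  subst h1
  refine ⟨rfl, ?_⟩
  have := congrArg (· % m) e
  simp only [snake_mod h, snake_mod h'] at this
  split_ifs at this <;> omega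

lemma snake_even {l b a : ℕ} (h : a < 2 * l + 1) :
    Even (snake (2 * l + 1) b a) ↔ (Even b ↔ Even a) := by
  unfold snake
  have h2 : Even (b * (2 * l + 1)) ↔ Even b := by
    rw [Nat.even_mul]; simp
  rw [Nat.even_add, h2]
  by_cases e : Even b
  · simp [e]
  · simp only [e, if_false]
    rw [show 2 * l + 1 - 1 - a = 2 * l - a by omega, Nat.even_sub (by omega)]
    simp

lemma klt_asymm {c p c' p' : ℕ} (h : klt c p c' p') : ¬ klt c' p' c p := by
  unfold klt at *; grind

lemma klt_trans {c p c' p' c'' p'' : ℕ} (h : klt c p c' p') (h' : klt c' p' c'' p'') :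
    klt c p c'' p'' := by
  unfold klt at *; grind

lemma klt_comp {l b a p t b' a' p' t' : ℕ} (h : a < 2 * l + 1) (h' : a' < 2 * l + 1)
    (h1 : t < t' ↔ klt a p a' p') (h2 : t' < t ↔ klt a' p' a p) :
    klt b t b' t' ↔ klt (snake (2 * l + 1) b a) p (snake (2 * l + 1) b' a') p' := by
  have e1 : snake (2 * l + 1) b a < snake (2 * l + 1) b' a' ↔ klt b a b' a' :=
    (klt_iff h h').symm
  have e2 : snake (2 * l + 1) b a = snake (2 * l + 1) b' a' ↔ b = b' ∧ a = a' :=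
    ⟨snake_inj h h', by rintro ⟨rfl, rfl⟩; rfl⟩
  have e3 := snake_even (b := b) h
  rw [show klt (snake (2 * l + 1) b a) p (snake (2 * l + 1) b' a') p' ↔
    (snake (2 * l + 1) b a < snake (2 * l + 1) b' a' ∨
    (snake (2 * l + 1) b a = snake (2 * l + 1) b' a' ∧
    ((Even (snake (2 * l + 1) b a) ∧ p < p') ∨
    (¬ Even (snake (2 * l + 1) b a) ∧ p' < p)))) from Iff.rfl]
  rw [e1, e2, e3]
  rw [show klt b t b' t' ↔ b < b' ∨ (b = b' ∧ ((Even b ∧ t < t') ∨ (¬ Even b ∧ t' < t)))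
    from Iff.rfl, h1, h2]
  unfold klt
  grind

/-- inverse of the snake -/
def unB (m c : ℕ) : ℕ := c / m
def unA (m c : ℕ) : ℕ := if Even (c / m) then c % m else m - 1 - c % m

lemma unA_lt {m c : ℕ} (hm : 0 < m) : unA m c < m := by
  have := Nat.mod_lt c hm
  unfold unA; split_ifs <;> omega

lemma snake_un {m c : ℕ} (hm : 0 < m) : snake m (unB m c) (unA m c) = c := by
  have := Nat.mod_lt c hm
  unfold snake unB unA
  conv_rhs => rw [← Nat.div_add_mod' c m]
  by_cases e : Even (c / m) <;> simp [e]
  omega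

lemma unB_snake {m c p : ℕ} (h : p < m) : unB m (snake m c p) = c := snake_div h

lemma unA_snake {m c p : ℕ} (h : p < m) : unA m (snake m c p) = p := by
  unfold unA
  rw [snake_div h, snake_mod h]
  split_ifs <;> omega

lemma cl_un_succ {l c : ℕ} (hc : ¬ Even c) :
    cl (unB (2 * l + 1) c) = cl (unB (2 * l + 1) (c + 1)) ∧
    cl (unA (2 * l + 1) c) = cl (unA (2 * l + 1) (c + 1)) := by
  set m := 2 * l + 1 with hm
  have hm0 : 0 < m := by omega
  obtain ⟨b, a, ha, rfl⟩ : ∃ b a, a < m ∧ c = snake m b a :=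
    ⟨_, _, unA_lt hm0, (snake_un hm0).symm⟩
  rw [snake_even ha] at hc
  rw [unB_snake ha, unA_snake ha]
  by_cases e : Even b
  · have ea : ¬ Even a := by tauto
    have : a + 1 < m := by
      rcases Nat.lt_or_ge (a + 1) m with h | h
      · exact h
      · exfalso; apply ea; rw [show a = 2 * l by omega]; simp
    have h2 : snake m b a + 1 = snake m b (a + 1) := by simp [snake, e]; ring
    rw [h2, unB_snake this, unA_snake this]
    refine ⟨rfl, ?_⟩
    rw [Nat.not_even_iff] at ea
    unfold cl; omega
  · have ea : Even a := by tauto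
    rcases Nat.eq_zero_or_pos a with h0 | h0
    · subst h0
      have h2 : snake m b 0 + 1 = snake m (b + 1) 0 := by
        have : Even (b + 1) := by rw [Nat.even_add_one]; exact e
        simp only [snake, e, this, if_true, if_false, add_mul]; omega
      rw [h2, unB_snake hm0, unA_snake hm0]
      refine ⟨?_, rfl⟩
      rw [Nat.not_even_iff] at e
      unfold cl; omega
    · have h2 : snake m b a + 1 = snake m b (a - 1) := by
        simp only [snake, e, if_false]; omega
      have h3 : a - 1 < m := by omega
      rw [h2, unB_snake h3, unA_snake h3]
      refine ⟨rfl, ?_⟩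
      rw [Nat.even_iff] at ea
      unfold cl; omega

lemma cl_un {l c c' : ℕ} (h : cl c = cl c') :
    cl (unB (2 * l + 1) c) = cl (unB (2 * l + 1) c') ∧
    cl (unA (2 * l + 1) c) = cl (unA (2 * l + 1) c') := by
  have : c = c' ∨ (¬ Even c ∧ c' = c + 1) ∨ (¬ Even c' ∧ c = c' + 1) := by
    simp only [Nat.even_iff]; unfold cl at h; omega
  rcases this with rfl | ⟨h1, rfl⟩ | ⟨h1, rfl⟩
  · exact ⟨rfl, rfl⟩
  · exact cl_un_succ h1
  · exact ⟨(cl_un_succ h1).1.symm, (cl_un_succ h1).2.symm⟩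

variable {n : ℕ}

def Compat (π : Perm (Fin n)) (c : Fin n → ℕ) : Prop :=
  ∀ i j, i < j → klt (c i) (π i) (c j) (π j)

instance (π : Perm (Fin n)) (c : Fin n → ℕ) : Decidable (Compat π c) := by
  unfold Compat; infer_instance

def Lset (π : Perm (Fin n)) (β : Fin n → ℕ) : Finset (Fin n → ℕ) :=
  (Fintype.piFinset fun i => {2 * β i - 1, 2 * β i}).filter (Compat π)

lemma mem_pair_iff {b c : ℕ} : c ∈ ({2 * b - 1, 2 * b} : Finset ℕ) ↔ cl c = b := by
  simp only [mem_insert, mem_singleton]; unfold cl; omega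

lemma mem_Lset {π : Perm (Fin n)} {β c : Fin n → ℕ} :
    c ∈ Lset π β ↔ (∀ i, cl (c i) = β i) ∧ Compat π c := by
  simp only [Lset, mem_filter, Fintype.mem_piFinset, mem_pair_iff]

lemma Compat.mono {π : Perm (Fin n)} {c : Fin n → ℕ} (h : Compat π c) : Monotone c := by
  intro i j hij
  rcases hij.lt_or_eq with h' | rfl
  · have := h i j h'
    unfold klt at this; omega
  · rfl

lemma cl_mono : Monotone cl := by intro a b h; unfold cl; omega

lemma exists_sort (π : Perm (Fin n)) (a : Fin n → ℕ) :
    ∃ τ : Perm (Fin n), ∀ i j, τ i < τ j → klt (a i) (π i) (a j) (π j) := by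
  let key : Fin n → ℕ := fun i => snake n (a i) (π i)
  have hinj : Function.Injective key := by
    intro i j h
    have := (snake_inj (π i).2 (π j).2 h).2
    exact π.injective (Fin.ext this)
  have hm : StrictMono (key ∘ Tuple.sort key) :=
    (Tuple.monotone_sort key).strictMono_of_injective (hinj.comp (Equiv.injective _))
  refine ⟨(Tuple.sort key)⁻¹, fun i j hij => ?_⟩
  have := hm hij
  have e : ∀ i, Tuple.sort key ((Tuple.sort key)⁻¹ i) = i := fun i => by simp
  simp only [Function.comp, e] at this
  exact (klt_iff (π i).2 (π j).2).2 this

lemma sort_iff {π τ : Perm (Fin n)} {a : Fin n → ℕ}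
    (h : ∀ i j, τ i < τ j → klt (a i) (π i) (a j) (π j)) (i j : Fin n) :
    τ i < τ j ↔ klt (a i) (π i) (a j) (π j) := by
  refine ⟨h i j, fun hk => ?_⟩
  rcases lt_trichotomy (τ i) (τ j) with h1 | h1 | h1
  · exact h1
  · have := τ.injective h1
    subst this
    exact absurd hk (klt_asymm hk)
  · exact absurd hk (klt_asymm (h _ _ h1))

lemma sort_unique {π τ τ' : Perm (Fin n)} {a : Fin n → ℕ}
    (h : ∀ i j, τ i < τ j → klt (a i) (π i) (a j) (π j))
    (h' : ∀ i j, τ' i < τ' j → klt (a i) (π i) (a j) (π j)) : τ = τ' := by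
  have h1 : StrictMono (τ' * τ⁻¹ : Perm (Fin n)) := by
    intro i j hij
    simp only [Perm.mul_apply]
    rw [sort_iff h', ← sort_iff h]
    simpa using hij
  have h2 : (τ' * τ⁻¹ : Perm (Fin n)) = 1 := by
    have h3 := Subsingleton.elim (h1.orderIsoOfSurjective _ (Equiv.surjective _))
      (OrderIso.refl (Fin n))
    ext i
    have := congrArg (fun f : Fin n ≃o Fin n => (f i : ℕ)) h3
    simpa using this
  exact (mul_inv_eq_one.1 h2).symm

lemma compat_conj {π τ : Perm (Fin n)} {a : Fin n → ℕ} :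
    Compat (π * τ⁻¹) a ↔
      ∀ i j, τ i < τ j → klt (a (τ i)) (π i) (a (τ j)) (π j) := by
  constructor
  · intro h i j hij
    simpa using h _ _ hij
  · intro h i j hij
    have := h (τ⁻¹ i) (τ⁻¹ j) (by simpa using hij)
    simpa using this

lemma compat_snake {l : ℕ} {π τ : Perm (Fin n)} {a b : Fin n → ℕ}
    (ha : ∀ i, a i < 2 * l + 1)
    (h : ∀ i j, τ i < τ j → klt (a i) (π i) (a j) (π j)) :
    Compat τ b ↔ Compat π (fun i => snake (2 * l + 1) (b i) (a i)) := by
  unfold Compat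
  refine forall_congr' fun i => forall_congr' fun j => imp_congr_right fun _ => ?_
  refine klt_comp (ha i) (ha j) ?_ ?_
  · rw [← sort_iff h, Fin.lt_def]
  · rw [← sort_iff h, Fin.lt_def]

theorem prod_formula (α β : Fin n → ℕ) (hα : Monotone α) :
    ∃ (M : ℕ) (Q : (Fin n → ℕ) → Prop), ∀ π : Perm (Fin n),
      ∑ τ : Perm (Fin n), (Lset (π * τ⁻¹) α).card * (Lset τ β).card =
      Set.ncard {c : Fin n → ℕ | (∀ i, c i < 2 * M + 1) ∧ Compat π c ∧ Q (cl ∘ c)} := by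
  classical
  set l := ∑ i, α i with hl
  set k := ∑ i, β i with hk
  have hαl : ∀ i, α i ≤ l := fun i => Finset.single_le_sum (fun _ _ => Nat.zero_le _) (mem_univ i)
  have hβk : ∀ i, β i ≤ k := fun i => Finset.single_le_sum (fun _ _ => Nat.zero_le _) (mem_univ i)
  set m := 2 * l + 1 with hm
  have hm0 : 0 < m := by omega
  let Q : (Fin n → ℕ) → Prop := fun γ => ∃ c : Fin n → ℕ, cl ∘ c = γ ∧
    (∀ i, cl (unB m (c i)) = β i) ∧ ∃ ρ : Perm (Fin n), ∀ i, cl (unA m (c i)) = α (ρ i)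
  have hQ : ∀ c : Fin n → ℕ, Q (cl ∘ c) ↔ (∀ i, cl (unB m (c i)) = β i) ∧
      ∃ ρ : Perm (Fin n), ∀ i, cl (unA m (c i)) = α (ρ i) := by
    intro c
    constructor
    · rintro ⟨c', h, h1, ρ, h2⟩
      have h3 : ∀ i, cl (c' i) = cl (c i) := fun i => congrFun h i
      refine ⟨fun i => ?_, ρ, fun i => ?_⟩
      · rw [← h1 i]; exact (cl_un (h3 i)).1.symm
      · rw [← h2 i]; exact (cl_un (h3 i)).2.symm
    · rintro ⟨h1, h2⟩
      exact ⟨c, rfl, h1, h2⟩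
  refine ⟨(2 * k + 1) * m, Q, fun π => ?_⟩
  have hfin : {c : Fin n → ℕ | (∀ i, c i < 2 * ((2 * k + 1) * m) + 1) ∧ Compat π c ∧
      Q (cl ∘ c)}.Finite := by
    apply Set.Finite.subset (Set.Finite.pi' fun _ : Fin n => Set.finite_Iio (2 * ((2 * k + 1) * m) + 1))
    intro c hc i
    exact hc.1 i
  rw [Set.ncard_eq_toFinset_card _ hfin]
  rw [show ∑ τ : Perm (Fin n), (Lset (π * τ⁻¹) α).card * (Lset τ β).card =
    ((univ : Finset (Perm (Fin n))).sigma fun τ => Lset (π * τ⁻¹) α ×ˢ Lset τ β).card by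
      rw [card_sigma]; simp only [card_product]]
  have hlt : ∀ {a : Fin n → ℕ}, (∀ i, cl (a i) = α i) → ∀ i, a i < 2 * l + 1 := by
    intro a h i
    have h1 := h i
    have h2 := hαl i
    unfold cl at h1; omega
  refine Finset.card_bij (fun x _ => fun i => snake m (x.2.2 i) (x.2.1 (x.1 i))) ?_ ?_ ?_
  · rintro ⟨τ, a, b⟩ hx
    simp only [mem_sigma, mem_univ, true_and, mem_product, mem_Lset] at hx
    obtain ⟨⟨ha, hca⟩, hb, hcb⟩ := hx
    simp only [Set.Finite.mem_toFinset, Set.mem_ofPred_eq]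
    refine ⟨fun i => ?_, ?_, ?_⟩
    · have h1 : b i ≤ 2 * k := by
        have h1 := hb i
        have h2 := hβk i
        unfold cl at h1; omega
      have h3 : (if Even (b i) then a (τ i) else m - 1 - a (τ i)) < m :=
        snake_off_lt (c := b i) (hlt ha (τ i))
      have h4 : b i * m ≤ 2 * k * m := Nat.mul_le_mul_right _ h1
      have h5 : (2 * k + 1) * m = 2 * k * m + m := by ring
      simp only [snake]
      omega
    · rw [compat_conj] at hca
      exact (compat_snake (fun i => hlt ha (τ i)) hca).1 hcb
    · rw [hQ]
      refine ⟨fun i => ?_, τ, fun i => ?_⟩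
      · rw [unB_snake (hlt ha _)]; exact hb i
      · rw [unA_snake (hlt ha _)]; exact ha _
  · rintro ⟨τ, a, b⟩ hx ⟨τ', a', b'⟩ hx' heq
    simp only [mem_sigma, mem_univ, true_and, mem_product, mem_Lset] at hx hx'
    obtain ⟨⟨ha, hca⟩, hb, hcb⟩ := hx
    obtain ⟨⟨ha', hca'⟩, hb', hcb'⟩ := hx'
    have h1 : ∀ i, b i = b' i ∧ a (τ i) = a' (τ' i) := fun i =>
      snake_inj (hlt ha _) (hlt ha' _) (congrFun heq i)
    have hbb : b = b' := funext fun i => (h1 i).1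
    rw [compat_conj] at hca hca'
    simp only [← fun i => (h1 i).2] at hca'
    have hτ : τ = τ' := sort_unique (a := fun i => a (τ i)) hca hca'
    subst hτ
    have haa : a = a' := by
      ext i
      have := (h1 (τ⁻¹ i)).2
      simpa using this
    rw [hbb, haa]
  · intro c hc
    simp only [Set.Finite.mem_toFinset, Set.mem_ofPred_eq, hQ] at hc
    obtain ⟨_, hcc, hB, ρ, hA⟩ := hc
    obtain ⟨τ, hτ⟩ := exists_sort π (fun i => unA m (c i))
    have hca : Compat (π * τ⁻¹) (fun i => unA m (c (τ⁻¹ i))) := by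
      rw [compat_conj]
      intro i j hij
      simpa using hτ i j hij
    refine ⟨⟨τ, fun i => unA m (c (τ⁻¹ i)), fun i => unB m (c i)⟩, ?_, ?_⟩
    · simp only [mem_sigma, mem_univ, true_and, mem_product, mem_Lset]
      refine ⟨⟨?_, hca⟩, hB, ?_⟩
      · have h1 : Monotone (α ∘ (ρ * τ⁻¹ : Perm (Fin n))) := by
          have : (α ∘ (ρ * τ⁻¹ : Perm (Fin n))) = cl ∘ (fun i => unA m (c (τ⁻¹ i))) := by
            ext i; simp [hA]
          rw [this]
          exact cl_mono.comp hca.mono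
        have h2 := Tuple.unique_monotone (f := α) (σ := ρ * τ⁻¹) (τ := 1) h1 (by simpa using hα)
        intro i
        have h3 := congrFun h2 i
        simp at h3
        rw [hA]; exact h3
      · rw [compat_snake (l := l) (fun i => unA_lt hm0) hτ]
        have e : (fun i => snake (2 * l + 1) (unB m (c i)) (unA m (c i))) = c :=
          funext fun i => snake_un hm0
        rw [e]; exact hcc
    · funext i
      simp [snake_un hm0]

end LPA

namespace LPA
open Equiv Finset

def F0 (B v : ℕ → ℕ) (i : ℕ) : Prop := B i = 0 ∨ (B (i - 1) = B i ∧ v (i - 1) < v i)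
def F1 (n : ℕ) (B v : ℕ → ℕ) (i : ℕ) : Prop := i < n ∧ B i = B (i + 1) ∧ v (i + 1) < v i

instance (B v : ℕ → ℕ) (i : ℕ) : Decidable (F0 B v i) := by unfold F0; infer_instance
instance (n : ℕ) (B v : ℕ → ℕ) (i : ℕ) : Decidable (F1 n B v i) := by unfold F1; infer_instance

def expS (n : ℕ) (B : ℕ → ℕ) : ℕ :=
  ∑ i ∈ range n, ((if B (i + 1) = 0 then 1 else 0) +
    (if B (i + 1) ≠ 0 ∧ B i = B (i + 1) then 1 else 0))

def condP (B : ℕ → ℕ) (S : Finset ℕ) : Prop :=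
  ∀ p ∈ S, ¬ (B (p - 1) = B p ∧ B p = B (p + 1))

instance (B : ℕ → ℕ) (S : Finset ℕ) : Decidable (condP B S) := by unfold condP; infer_instance

lemma conflict_iff {n : ℕ} {B v : ℕ → ℕ} (hB0 : B 0 = 0)
    (hB : ∀ i j, i ≤ j → j ≤ n → B i ≤ B j) (hv : ∀ i, i < n → v i ≠ v (i + 1))
    (hv0 : v 0 = 0) :
    (∃ i < n, F0 B v (i + 1) ∧ F1 n B v (i + 1)) ↔
    ∃ p, 1 ≤ p ∧ p < n ∧ v (p - 1) < v p ∧ v (p + 1) < v p ∧ B (p - 1) = B p ∧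
      B p = B (p + 1) := by
  constructor
  · rintro ⟨i, hi, h0, h1⟩
    obtain ⟨h1, h2, h3⟩ := h1
    rcases h0 with h0 | ⟨h0, h0'⟩
    · -- smallest descent
      have hex : ∃ j, v (j + 1) < v j ∧ j < n := ⟨i + 1, h3, h1⟩
      classical
      obtain ⟨hd, hjn⟩ := Nat.find_spec hex
      set j := Nat.find hex with hj
      have hji : j ≤ i + 1 := Nat.find_min' hex ⟨h3, h1⟩
      have hj1 : 1 ≤ j := by
        rcases Nat.eq_zero_or_pos j with h | h
        · rw [h, hv0] at hd; omega
        · exact h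
      have hmin := Nat.find_min hex (m := j - 1) (by omega)
      have hne := hv (j - 1) (by omega)
      rw [show j - 1 + 1 = j by omega] at hmin hne
      have b1 := hB (j + 1) (i + 1 + 1) (by omega) (by omega)
      have b2 := hB j (j + 1) (by omega) (by omega)
      have b3 := hB (j - 1) j (by omega) (by omega)
      refine ⟨j, hj1, hjn, ?_, hd, by omega, by omega⟩
      by_contra hc
      exact hmin ⟨by omega, by omega⟩
    · exact ⟨i + 1, by omega, h1, h0', h3, h0, h2⟩
  · rintro ⟨p, hp1, hpn, h1, h2, h3, h4⟩
    refine ⟨p - 1, by omega, ?_⟩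
    rw [show p - 1 + 1 = p by omega]
    exact ⟨Or.inr ⟨h3, h1⟩, hpn, h4, h2⟩

lemma sum_eq {n : ℕ} {B v : ℕ → ℕ} (hB0 : B 0 = 0)
    (hv : ∀ i, i < n → v i ≠ v (i + 1))
    (hc : ∀ i < n, ¬ (F0 B v (i + 1) ∧ F1 n B v (i + 1))) :
    ∑ i ∈ range n, ((if F0 B v (i + 1) then 1 else 0) + (if F1 n B v (i + 1) then 1 else 0))
      = expS n B := by
  let h : ℕ → ℕ := fun i => if B i ≠ 0 ∧ F1 n B v i then 1 else 0
  have h0 : h 0 = 0 := by simp [h, hB0]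
  have hn : h n = 0 := by simp [h, F1]
  have hs : ∑ i ∈ range n, h (i + 1) = ∑ i ∈ range n, h i := by
    have h1 := sum_range_succ h n
    have h2 := sum_range_succ' h n
    omega
  have e1 : ∀ i ∈ range n,
      ((if F0 B v (i + 1) then 1 else 0) + (if F1 n B v (i + 1) then 1 else 0)) =
      ((if B (i + 1) = 0 then 1 else 0) +
        (if B (i + 1) ≠ 0 ∧ B i = B (i + 1) ∧ v i < v (i + 1) then 1 else 0)) + h (i + 1) := by
    intro i hi
    have := hc i (mem_range.1 hi)
    simp only [h]
    by_cases hb : B (i + 1) = 0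
    · have f0 : F0 B v (i + 1) := Or.inl hb
      have f1 : ¬ F1 n B v (i + 1) := fun f => this ⟨f0, f⟩
      simp [f0, f1, hb]
    · simp [hb, F0]
  rw [sum_congr rfl e1, sum_add_distrib, hs, ← sum_add_distrib]
  unfold expS
  apply sum_congr rfl
  intro i hi
  have hi := mem_range.1 hi
  have := hv i hi
  simp only [h, F1, hi, true_and]
  rw [add_assoc]
  congr 1
  split_ifs <;> first | rfl | (exfalso; omega)

open Classical in
lemma prod_eq {n : ℕ} {B v : ℕ → ℕ} (hB0 : B 0 = 0)
    (hB : ∀ i j, i ≤ j → j ≤ n → B i ≤ B j) (hv : ∀ i, i < n → v i ≠ v (i + 1))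
    (hv0 : v 0 = 0) :
    ∏ i ∈ range n, (2 - (if F0 B v (i + 1) then 1 else 0) - (if F1 n B v (i + 1) then 1 else 0))
    = if (∃ p, 1 ≤ p ∧ p < n ∧ v (p - 1) < v p ∧ v (p + 1) < v p ∧ B (p - 1) = B p ∧
      B p = B (p + 1)) then 0 else 2 ^ (n - expS n B) := by
  rw [← conflict_iff hB0 hB hv hv0]
  split_ifs with hc
  · obtain ⟨i, hi, h0, h1⟩ := hc
    apply prod_eq_zero (mem_range.2 hi)
    simp [h0, h1]
  · have hc' : ∀ i < n, ¬ (F0 B v (i + 1) ∧ F1 n B v (i + 1)) := by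
      intro i hi h; exact hc ⟨i, hi, h⟩
    set P := ∏ i ∈ range n,
      (2 - (if F0 B v (i + 1) then 1 else 0) - (if F1 n B v (i + 1) then 1 else 0)) with hP
    have key : P * 2 ^ expS n B = 2 ^ n := by
      rw [← sum_eq hB0 hv hc', ← prod_pow_eq_pow_sum, hP, ← prod_mul_distrib]
      rw [show (2 : ℕ) ^ n = ∏ i ∈ range n, 2 by simp]
      apply prod_congr rfl
      intro i hi
      have := hc' i (mem_range.1 hi)
      by_cases h0 : F0 B v (i + 1) <;> by_cases h1 : F1 n B v (i + 1) <;> simp_all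
    have hle : expS n B ≤ n := (Nat.pow_dvd_pow_iff_le_right (x := 2) (by norm_num)).1
      (Dvd.intro_left _ key)
    have h2 : 2 ^ (n - expS n B) * 2 ^ expS n B = 2 ^ n := by
      rw [← pow_add]; congr 1; omega
    exact Nat.eq_of_mul_eq_mul_right (by positivity) (key.trans h2.symm)

variable {n : ℕ}

def finE (n : ℕ) : Fin n ≃ {i : ℕ // 1 ≤ i ∧ i ≤ n} where
  toFun i := ⟨i + 1, by omega⟩
  invFun i := ⟨i.1 - 1, by have := i.2; omega⟩
  left_inv i := by simp
  right_inv i := by ext; have := i.2; simp; omega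

def iota (n : ℕ) : Perm (Fin n) →* Perm ℕ := Perm.extendDomainHom (finE n)

lemma iota_succ (π : Perm (Fin n)) (i : Fin n) : iota n π (i + 1) = π i + 1 :=
  Perm.extendDomain_apply_image π (finE n) i

lemma iota_fix (π : Perm (Fin n)) : IsSn n (iota n π) := by
  intro i hi
  exact Perm.extendDomain_apply_not_subtype π (finE n) (by omega)

lemma iota_inj : Function.Injective (iota n) := Perm.extendDomainHom_injective (finE n)

lemma iota_surj {π : Perm ℕ} (h : IsSn n π) : ∃ π₀, iota n π₀ = π := by
  have hp : ∀ x, (1 ≤ π x ∧ π x ≤ n) ↔ (1 ≤ x ∧ x ≤ n) := by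
    intro x
    by_cases hx : 1 ≤ x ∧ x ≤ n
    · simp only [hx, and_self, iff_true]
      by_contra hc
      have h1 := h (π x) (by omega)
      have := π.injective h1
      omega
    · rw [h x (by omega)]
  refine ⟨(finE n).symm.permCongr (π.subtypePerm hp), ?_⟩
  ext i
  by_cases hi : 1 ≤ i ∧ i ≤ n
  · obtain ⟨j, rfl⟩ : ∃ j : Fin n, i = j + 1 := ⟨⟨i - 1, by omega⟩, by simp; omega⟩
    rw [iota_succ]
    have := (hp (j + 1)).2 hi
    simp [finE, permCongr_apply]
    omega
  · rw [iota_fix _ i (by omega), h i (by omega)]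

def lp (π : Perm (Fin n)) : Finset ℕ := leftPeaks n (iota n π)

def ext (β : Fin n → ℕ) (i : ℕ) : ℕ :=
  if h : 1 ≤ i ∧ i ≤ n then β ⟨i - 1, by omega⟩ else 0

lemma ext_succ (β : Fin n → ℕ) (i : Fin n) : ext β (i + 1) = β i := by
  unfold ext
  have := i.2
  rw [dif_pos (by omega)]
  simp

lemma ext_zero (β : Fin n → ℕ) : ext β 0 = 0 := by simp [ext]

lemma ext_mono {β : Fin n → ℕ} (h : Monotone β) (i j : ℕ) (hij : i ≤ j) (hj : j ≤ n) :
    ext β i ≤ ext β j := by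
  unfold ext
  split_ifs
  · apply h; simp [Fin.le_def]; omega
  · omega
  · omega
  · omega

lemma fin_surj {i : ℕ} (h1 : 1 ≤ i) (h2 : i ≤ n) : ∃ j : Fin n, i = j + 1 :=
  ⟨⟨i - 1, by omega⟩, by simp; omega⟩

lemma klt_succ {c p c' p' : ℕ} : klt c (p + 1) c' (p' + 1) ↔ klt c p c' p' := by
  unfold klt; simp

lemma compat_local (π : Perm (Fin n)) (c : Fin n → ℕ) :
    Compat π c ↔ ∀ i, 1 ≤ i → i < n →
      klt (ext c i) (iota n π i) (ext c (i + 1)) (iota n π (i + 1)) := by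
  constructor
  · intro h i h1 h2
    obtain ⟨j, hj⟩ := fin_surj h1 h2.le
    obtain ⟨k, hk⟩ := fin_surj (n := n) (i := i + 1) (by omega) (by omega)
    rw [hk, hj, ext_succ, ext_succ, iota_succ, iota_succ, klt_succ]
    apply h; rw [Fin.lt_def]; omega
  · intro h
    have key : ∀ i j, 1 ≤ i → i + 1 ≤ j → j ≤ n →
        klt (ext c i) (iota n π i) (ext c j) (iota n π j) := by
      intro i j hi hij
      induction j, hij using Nat.le_induction with
      | base => intro hj; exact h i hi hj
      | succ j hij ih =>
        intro hj
        exact klt_trans (ih (by omega)) (h j (by omega) (by omega))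
    intro i j hij
    have := key (i + 1) (j + 1) (by omega) (by rw [Fin.lt_def] at hij; omega) (by omega)
    rwa [ext_succ, ext_succ, iota_succ, iota_succ, klt_succ] at this

lemma iota_ne (π : Perm (Fin n)) (i : ℕ) : iota n π i ≠ iota n π (i + 1) := by
  intro h
  have := (iota n π).injective h
  omega

lemma compat_local' {π : Perm (Fin n)} {β c : Fin n → ℕ} (hβ : Monotone β)
    (hc : ∀ i, cl (c i) = β i) :
    Compat π c ↔ ∀ i : Fin n, (F0 (ext β) (iota n π) (i + 1) → Even (c i)) ∧
      (F1 n (ext β) (iota n π) (i + 1) → ¬ Even (c i)) := by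
  have hce : ∀ i, cl (ext c i) = ext β i := by
    intro i
    unfold ext
    split_ifs
    · exact hc _
    · rfl
  have hR : (∀ i : Fin n, (F0 (ext β) (iota n π) (i + 1) → Even (c i)) ∧
      (F1 n (ext β) (iota n π) (i + 1) → ¬ Even (c i))) ↔
      ∀ i, 1 ≤ i → i ≤ n → (F0 (ext β) (iota n π) i → Even (ext c i)) ∧
      (F1 n (ext β) (iota n π) i → ¬ Even (ext c i)) := by
    constructor
    · intro h i h1 h2
      obtain ⟨j, rfl⟩ := fin_surj h1 h2
      rw [ext_succ c]; exact h j
    · intro h i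
      have := h (i + 1) (by omega) (by omega)
      rwa [ext_succ c] at this
  rw [hR, compat_local]
  have hm := ext_mono hβ
  constructor
  · intro h i h1 h2
    constructor
    · rintro (h3 | ⟨h3, h4⟩)
      · have := hce i
        rw [h3] at this
        have : ext c i = 0 := by unfold cl at this; omega
        rw [this]; simp
      · rcases Nat.lt_or_ge 1 i with h5 | h5
        · have := h (i - 1) (by omega) (by omega)
          rw [show i - 1 + 1 = i by omega] at this
          have e1 := hce (i - 1)
          have e2 := hce i
          unfold klt at this
          unfold cl at e1 e2
          rw [Nat.even_iff] at *
          omega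
        · have : i = 1 := by omega
          subst this
          rw [show 1 - 1 = 0 from rfl, ext_zero] at h3
          have := hce 1
          rw [← h3] at this
          have : ext c 1 = 0 := by unfold cl at this; omega
          rw [this]; simp
    · rintro ⟨h3, h4, h5⟩
      have := h i h1 h3
      have e1 := hce i
      have e2 := hce (i + 1)
      unfold klt at this
      unfold cl at e1 e2
      rw [Nat.even_iff] at *
      omega
  · intro h i h1 h2
    have b := hm i (i + 1) (by omega) (by omega)
    have e1 := hce i
    have e2 := hce (i + 1)
    have ne := iota_ne π i
    have g1 := (h i h1 h2.le).2
    have g2 := (h (i + 1) (by omega) (by omega)).1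
    unfold F1 at g1
    unfold F0 at g2
    rw [show i + 1 - 1 = i by omega] at g2
    unfold klt
    unfold cl at e1 e2
    rw [Nat.even_iff] at *
    omega

open Classical in
lemma Lset_card {π : Perm (Fin n)} {β : Fin n → ℕ} (hβ : Monotone β) :
    (Lset π β).card = if condP (ext β) (lp π) then 2 ^ (n - expS n (ext β)) else 0 := by
  have h1 : Lset π β = Fintype.piFinset fun i : Fin n =>
      ({2 * β i - 1, 2 * β i} : Finset ℕ).filter fun c =>
        (F0 (ext β) (iota n π) (i + 1) → Even c) ∧
        (F1 n (ext β) (iota n π) (i + 1) → ¬ Even c) := by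
    ext c
    simp only [mem_Lset, Fintype.mem_piFinset, mem_filter, mem_pair_iff, forall_and (p := fun i => cl (c i) = β i)]
    refine and_congr_right fun h => ?_
    exact compat_local' hβ h
  have h2 : ∀ i : Fin n, (({2 * β i - 1, 2 * β i} : Finset ℕ).filter fun c =>
        (F0 (ext β) (iota n π) (i + 1) → Even c) ∧
        (F1 n (ext β) (iota n π) (i + 1) → ¬ Even c)).card =
      2 - (if F0 (ext β) (iota n π) (i + 1) then 1 else 0) -
        (if F1 n (ext β) (iota n π) (i + 1) then 1 else 0) := by
    intro i
    rcases Nat.eq_zero_or_pos (β i) with h | h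
    · have f0 : F0 (ext β) (iota n π) (i + 1) := Or.inl (by rw [ext_succ, h])
      by_cases f1 : F1 n (ext β) (iota n π) (i + 1) <;> simp [f0, f1, h, filter_singleton]
    · have e1 : ¬ Even (2 * β i - 1) := by rw [Nat.even_iff]; omega
      have e2 : Even (2 * β i) := by simp
      have e3 : 2 * β i - 1 ≠ 2 * β i := by omega
      by_cases f0 : F0 (ext β) (iota n π) (i + 1) <;>
      by_cases f1 : F1 n (ext β) (iota n π) (i + 1) <;>
      simp only [f0, f1, filter_insert, filter_singleton, e1, e2] <;> simp [e3]
  rw [h1, Fintype.card_piFinset]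
  simp only [h2]
  rw [Fin.prod_univ_eq_prod_range (fun i =>
    2 - (if F0 (ext β) (iota n π) (i + 1) then 1 else 0) -
        (if F1 n (ext β) (iota n π) (i + 1) then 1 else 0)) n]
  rw [prod_eq (ext_zero β) (ext_mono hβ) (fun i _ => iota_ne π i) (iota_fix π 0 (Or.inl rfl))]
  have h3 : condP (ext β) (lp π) ↔ ¬ (∃ p, 1 ≤ p ∧ p < n ∧ iota n π (p - 1) < iota n π p ∧
      iota n π (p + 1) < iota n π p ∧ ext β (p - 1) = ext β p ∧ ext β p = ext β (p + 1)) := by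
    unfold condP lp leftPeaks
    simp only [mem_filter, mem_Icc]
    constructor
    · rintro h ⟨p, h1, h2, h3, h4, h5⟩
      exact h p ⟨by omega, h3, h4⟩ h5
    · rintro h p ⟨h1, h3, h4⟩ h5
      exact h ⟨p, by omega, by omega, h3, h4, h5⟩
  simp only [h3, ite_not]

lemma Lset_inv {π π' : Perm (Fin n)} (h : lp π = lp π') (β : Fin n → ℕ) :
    (Lset π β).card = (Lset π' β).card := by
  by_cases hβ : Monotone β
  · rw [Lset_card hβ, Lset_card hβ, h]
  · have : ∀ π : Perm (Fin n), Lset π β = ∅ := by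
      intro π
      rw [eq_empty_iff_forall_notMem]
      intro c hc
      rw [mem_Lset] at hc
      apply hβ
      rw [show β = cl ∘ c from funext fun i => (hc.1 i).symm]
      exact cl_mono.comp hc.2.mono
    rw [this, this]

lemma big_inv {π π' : Perm (Fin n)} (h : lp π = lp π') (M : ℕ) (Q : (Fin n → ℕ) → Prop) :
    Set.ncard {c : Fin n → ℕ | (∀ i, c i < 2 * M + 1) ∧ Compat π c ∧ Q (cl ∘ c)} =
    Set.ncard {c : Fin n → ℕ | (∀ i, c i < 2 * M + 1) ∧ Compat π' c ∧ Q (cl ∘ c)} := by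
  classical
  have key : ∀ π : Perm (Fin n),
      Set.ncard {c : Fin n → ℕ | (∀ i, c i < 2 * M + 1) ∧ Compat π c ∧ Q (cl ∘ c)} =
      ∑ γ ∈ (Fintype.piFinset fun _ : Fin n => range (M + 1)).filter Q, (Lset π γ).card := by
    intro π
    rw [← card_biUnion, ← Set.ncard_coe_finset]
    · congr 1
      ext c
      simp only [Set.mem_ofPred_eq, coe_biUnion, Set.mem_iUnion, mem_coe, mem_filter,
        Fintype.mem_piFinset, mem_range, mem_Lset, exists_prop]
      constructor
      · rintro ⟨h1, h2, h3⟩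
        refine ⟨cl ∘ c, ⟨fun i => ?_, h3⟩, fun i => rfl, h2⟩
        have := h1 i
        simp only [Function.comp, cl]; omega
      · rintro ⟨γ, ⟨h1, h2⟩, h3, h4⟩
        have : cl ∘ c = γ := funext h3
        refine ⟨fun i => ?_, h4, this ▸ h2⟩
        have e1 := h1 i
        have e2 := h3 i
        unfold cl at e2; omega
    · intro γ _ γ' _ hne
      rw [Function.onFun, disjoint_left]
      intro c hc hc'
      rw [mem_Lset] at hc hc'
      exact hne (funext fun i => (hc.1 i).symm.trans (hc'.1 i))
  rw [key, key]
  exact sum_congr rfl fun γ _ => Lset_inv h γ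

theorem L_prod_inv {π π' : Perm (Fin n)} (h : lp π = lp π') (α β : Fin n → ℕ)
    (hα : Monotone α) :
    ∑ τ : Perm (Fin n), (Lset (π * τ⁻¹) α).card * (Lset τ β).card =
    ∑ τ : Perm (Fin n), (Lset (π' * τ⁻¹) α).card * (Lset τ β).card := by
  obtain ⟨M, Q, hMQ⟩ := prod_formula α β hα
  rw [hMQ, hMQ, big_inv h]

end LPA

namespace LPA
open Equiv Finset

/-- The sparse subsets of `[1, m]`. -/
def spm (m : ℕ) : Finset (Finset ℕ) :=
  (Icc 1 m).powerset.filter fun I => ∀ i ∈ I, i + 1 ∉ I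

lemma mem_spm {m : ℕ} {I : Finset ℕ} :
    I ∈ spm m ↔ I ⊆ Icc 1 m ∧ ∀ i ∈ I, i + 1 ∉ I := by
  simp [spm]

lemma spm_rec (m : ℕ) : (spm (m + 2)).card = (spm (m + 1)).card + (spm m).card := by
  have h1 : spm (m + 2) = spm (m + 1) ∪ (spm m).image (insert (m + 2)) := by
    ext I
    simp only [mem_union, mem_image, mem_spm]
    constructor
    · rintro ⟨h1, h2⟩
      by_cases h : m + 2 ∈ I
      · right
        refine ⟨I.erase (m + 2), ⟨?_, ?_⟩, insert_erase h⟩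
        · intro i hi
          rw [mem_erase] at hi
          have a1 := mem_Icc.1 (h1 hi.2)
          have a2 : i ≠ m + 1 := by
            rintro rfl
            exact h2 _ hi.2 h
          rw [mem_Icc]; omega
        · intro i hi hi'
          exact h2 i (mem_of_mem_erase hi) (mem_of_mem_erase hi')
      · left
        refine ⟨fun i hi => ?_, h2⟩
        have a1 := mem_Icc.1 (h1 hi)
        have a2 : i ≠ m + 2 := by rintro rfl; exact h hi
        rw [mem_Icc]; omega
    · rintro (⟨h1, h2⟩ | ⟨J, ⟨h1, h2⟩, rfl⟩)
      · exact ⟨h1.trans (Icc_subset_Icc_right (by omega)), h2⟩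
      · refine ⟨?_, ?_⟩
        · intro i hi
          rcases mem_insert.1 hi with rfl | hi
          · rw [mem_Icc]; omega
          · have := mem_Icc.1 (h1 hi)
            rw [mem_Icc]; omega
        · intro i hi hi'
          rcases mem_insert.1 hi with rfl | hi <;> rcases mem_insert.1 hi' with hi' | hi'
          · omega
          · have := mem_Icc.1 (h1 hi'); omega
          · have := mem_Icc.1 (h1 hi); omega
          · exact h2 i hi hi'
  rw [h1, card_union_of_disjoint, card_image_of_injOn]
  · intro I hI J hJ h
    simp only [mem_coe, mem_spm] at hI hJ
    have a1 : m + 2 ∉ I := fun h => by have := mem_Icc.1 (hI.1 h); omega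
    have a2 : m + 2 ∉ J := fun h => by have := mem_Icc.1 (hJ.1 h); omega
    have := congrArg (fun S => S.erase (m + 2)) h
    simpa [erase_insert a1, erase_insert a2] using this
  · rw [disjoint_left]
    intro I hI hI'
    rw [mem_image] at hI'
    obtain ⟨J, _, rfl⟩ := hI'
    have := mem_Icc.1 ((mem_spm.1 hI).1 (mem_insert_self _ _))
    omega

lemma spm_card : ∀ m : ℕ, (spm m).card = Nat.fib (m + 2)
  | 0 => by decide
  | 1 => by decide
  | m + 2 => by
    rw [spm_rec, spm_card (m + 1), spm_card m]
    rw [Nat.fib_add_two (n := m + 2)]; ring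

lemma sp_card (n : ℕ) : (spm (n - 1)).card = Nat.fib (n + 1) := by
  rcases n with _ | n
  · decide
  · exact spm_card n

variable {n : ℕ}

lemma lp_mem (π : Perm (Fin n)) : lp π ∈ spm (n - 1) := by
  rw [mem_spm]
  refine ⟨filter_subset _ _, ?_⟩
  intro i hi hi'
  simp only [lp, leftPeaks, mem_filter] at hi hi'
  have := hi'.2.1
  rw [show i + 1 - 1 = i by omega] at this
  omega

/-- the involution swapping `i` and `i+1` for `i ∈ I` -/
def swf (I : Finset ℕ) (i : ℕ) : ℕ :=
  if i ∈ I then i + 1 else if 1 ≤ i ∧ i - 1 ∈ I then i - 1 else i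

lemma swf_invol {I : Finset ℕ} (h : ∀ i ∈ I, i + 1 ∉ I) : Function.Involutive (swf I) := by
  intro i
  unfold swf
  by_cases h1 : i ∈ I
  · simp [h1, h i h1]
  · by_cases h2 : 1 ≤ i ∧ i - 1 ∈ I
    · simp only [h1, h2, if_true, if_false, and_self]; omega
    · simp [h1, h2]

lemma exists_lp {I : Finset ℕ} (hI : I ∈ spm (n - 1)) : ∃ π : Perm (Fin n), lp π = I := by
  obtain ⟨h1, h2⟩ := mem_spm.1 hI
  have hs : IsSn n (swf_invol h2).toPerm := by
    intro i hi
    have a1 : i ∉ I := fun h => by have := mem_Icc.1 (h1 h); omega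
    have a2 : ¬ (1 ≤ i ∧ i - 1 ∈ I) := fun h => by have := mem_Icc.1 (h1 h.2); omega
    simp [swf, a1, a2]
  obtain ⟨π, hπ⟩ := iota_surj hs
  refine ⟨π, ?_⟩
  ext i
  simp only [lp, leftPeaks, hπ, mem_filter, Function.Involutive.coe_toPerm]
  constructor
  · rintro ⟨a1, a2, a3⟩
    by_contra hc
    have b1 : swf I i ≤ i := by unfold swf; simp only [hc, if_false]; split_ifs <;> omega
    have b2 : i ≤ swf I (i + 1) := by unfold swf; split_ifs <;> omega
    omega
  · intro hi
    have a1 := mem_Icc.1 (h1 hi)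
    refine ⟨h1 hi, ?_, ?_⟩
    · have b1 : swf I i = i + 1 := by simp [swf, hi]
      have b2 : swf I (i - 1) ≤ i - 1 + 1 := by unfold swf; split_ifs <;> omega
      omega
    · simp [swf, hi, h2 i hi]

def bA (n : ℕ) (A : Finset ℕ) (i : Fin n) : ℕ := (A.filter (· < (i : ℕ) + 1)).card

lemma bA_mono (A : Finset ℕ) : Monotone (bA n A) := by
  intro i j hij
  apply card_le_card
  intro c hc
  rw [mem_filter] at *
  rw [Fin.le_def] at hij
  exact ⟨hc.1, by omega⟩

lemma ext_bA (A : Finset ℕ) (i : ℕ) (hi : i ≤ n) :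
    ext (bA n A) i = (A.filter (· < i)).card := by
  rcases Nat.eq_zero_or_pos i with rfl | h
  · simp [ext_zero]
  · obtain ⟨j, rfl⟩ := fin_surj h hi
    rw [ext_succ]; rfl

lemma card_step (A : Finset ℕ) (p : ℕ) :
    (A.filter (· < p)).card = (A.filter (· < p + 1)).card ↔ p ∉ A := by
  constructor
  · intro h hp
    have hss : A.filter (· < p) ⊆ A.filter (· < p + 1) := by
      intro c hc
      rw [mem_filter] at *
      exact ⟨hc.1, by omega⟩
    have := eq_of_subset_of_card_le hss h.ge
    have h2 : p ∈ A.filter (· < p + 1) := by simp [hp]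
    rw [← this] at h2
    simp at h2
  · intro hp
    congr 1
    apply filter_congr
    intro c hc
    have : c ≠ p := by rintro rfl; exact hp hc
    omega

def cnd (A J : Finset ℕ) : Prop := ∀ p ∈ J, p ∈ A ∨ p - 1 ∈ A

instance (A J : Finset ℕ) : Decidable (cnd A J) := by unfold cnd; infer_instance

lemma condP_bA (A : Finset ℕ) {J : Finset ℕ} (hJ : J ⊆ Icc 1 (n - 1)) :
    condP (ext (bA n A)) J ↔ cnd A J := by
  unfold condP cnd
  refine forall_congr' fun p => imp_congr_right fun hp => ?_
  have := mem_Icc.1 (hJ hp)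
  rw [ext_bA _ _ (by omega), ext_bA _ _ (by omega), ext_bA _ _ (by omega), card_step]
  have h2 := card_step A (p - 1)
  rw [show p - 1 + 1 = p by omega] at h2
  rw [h2]
  tauto

def msr (n : ℕ) (A : Finset ℕ) : ℕ := ∑ p ∈ A, (n - p)

lemma msr_lt {A J : Finset ℕ} (hA : A ⊆ Icc 1 (n - 1)) (hJ : J ∈ spm (n - 1))
    (h : cnd A J) (hne : J ≠ A) : msr n J < msr n A := by
  obtain ⟨hJ1, hJ2⟩ := mem_spm.1 hJ
  let f : ℕ → ℕ := fun p => if p ∈ A then p else p - 1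
  have hfle : ∀ p, f p ≤ p := fun p => by simp only [f]; split_ifs <;> omega
  have hfA : ∀ p ∈ J, f p ∈ A := by
    intro p hp
    simp only [f]
    split_ifs with h1
    · exact h1
    · exact (h p hp).resolve_left h1
  have hinj : Set.InjOn f J := by
    intro p hp q hq hpq
    have a1 := mem_Icc.1 (hJ1 hp)
    have a2 := mem_Icc.1 (hJ1 hq)
    have b1 := hJ2 p hp
    have b2 := hJ2 q hq
    have c1 : q ≠ p + 1 := by rintro rfl; exact b1 hq
    have c2 : p ≠ q + 1 := by rintro rfl; exact b2 hp
    simp only [f] at hpq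
    split_ifs at hpq <;> omega
  have e1 : ∑ p ∈ J, (n - f p) = ∑ q ∈ J.image f, (n - q) := (sum_image hinj).symm
  have e2 : J.image f ⊆ A := by
    intro q hq
    obtain ⟨p, hp, rfl⟩ := mem_image.1 hq
    exact hfA p hp
  have e3 : ∑ q ∈ J.image f, (n - q) ≤ msr n A := sum_le_sum_of_subset e2
  by_cases hs : J ⊆ A
  · have hss : J ⊂ A := ⟨hs, fun h' => hne (hs.antisymm h')⟩
    obtain ⟨q, hqA, hqJ⟩ := exists_of_ssubset hss
    have := mem_Icc.1 (hA hqA)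
    exact sum_lt_sum_of_subset hs hqA hqJ (by omega) (fun _ _ _ => Nat.zero_le _)
  · obtain ⟨q, hqJ, hqA⟩ := not_subset.1 hs
    have e4 : msr n J < ∑ p ∈ J, (n - f p) := by
      apply sum_lt_sum
      · intro p _
        have := hfle p; omega
      · refine ⟨q, hqJ, ?_⟩
        have := mem_Icc.1 (hJ1 hqJ)
        simp only [f, hqA, if_false]; omega
    omega

def ind (A : Finset ℕ) (τ : Perm (Fin n)) : ℚ := if lp τ = A then 1 else 0

def Lf (β : Fin n → ℕ) (τ : Perm (Fin n)) : ℚ := (Lset τ β).card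

def LV (n : ℕ) : Submodule ℚ (Perm (Fin n) → ℚ) :=
  Submodule.span ℚ {u | ∃ β : Fin n → ℕ, Monotone β ∧ u = Lf β}

lemma ind_mem (A : Finset ℕ) : ind A ∈ LV n := by
  by_cases hA : A ∈ spm (n - 1)
  swap
  · have : ind (n := n) A = 0 := by
      funext τ
      have : lp τ ≠ A := fun h => hA (h ▸ lp_mem τ)
      simp [ind, this]
    rw [this]; exact Submodule.zero_mem _
  induction hk : msr n A using Nat.strong_induction_on generalizing A with
  | _ k ih =>
  have hA1 := (mem_spm.1 hA).1
  set K : ℚ := 2 ^ (n - expS n (ext (bA n A))) with hK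
  have hK0 : K ≠ 0 := by positivity
  have hL : Lf (bA n A) = K • ∑ J ∈ (spm (n - 1)).filter (cnd A), ind J := by
    funext τ
    simp only [Lf, Lset_card (bA_mono A), condP_bA A (mem_spm.1 (lp_mem τ)).1,
      Pi.smul_apply, Finset.sum_apply, ind, smul_eq_mul]
    rw [Finset.sum_ite_eq]
    simp only [mem_filter, lp_mem, true_and]
    split_ifs <;> simp [hK]
  have hAA : A ∈ (spm (n - 1)).filter (cnd A) := by
    rw [mem_filter]; exact ⟨hA, fun p hp => Or.inl hp⟩
  have hE : ind A = K⁻¹ • Lf (bA n A) - ∑ J ∈ ((spm (n - 1)).filter (cnd A)).erase A, ind J := by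
    rw [hL, smul_smul, inv_mul_cancel₀ hK0, one_smul, ← add_sum_erase _ _ hAA]
    simp
  rw [hE]
  refine Submodule.sub_mem _ (Submodule.smul_mem _ _ (Submodule.subset_span ⟨_, bA_mono A, rfl⟩))
    (Submodule.sum_mem _ fun J hJ => ?_)
  rw [mem_erase, mem_filter] at hJ
  exact ih (msr n J) (hk ▸ msr_lt hA1 hJ.2.1 hJ.2.2 hJ.1) J hJ.2.1 rfl

theorem conv_inv {π π' : Perm (Fin n)} (h : lp π = lp π') {u v : Perm (Fin n) → ℚ}
    (hu : u ∈ LV n) (hv : v ∈ LV n) :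
    ∑ τ, u (π * τ⁻¹) * v τ = ∑ τ, u (π' * τ⁻¹) * v τ := by
  refine Submodule.span_induction₂
    (p := fun u v _ _ => ∑ τ, u (π * τ⁻¹) * v τ = ∑ τ, u (π' * τ⁻¹) * v τ)
    ?_ ?_ ?_ ?_ ?_ ?_ ?_ hu hv
  · rintro u v ⟨α, hα, rfl⟩ ⟨β, hβ, rfl⟩
    have := L_prod_inv h α β hα
    simp only [Lf]
    exact_mod_cast this
  · intro y _; simp
  · intro y _; simp
  · intro x y z _ _ _ h1 h2
    simp only [Pi.add_apply, add_mul, sum_add_distrib, h1, h2]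
  · intro x y z _ _ _ h1 h2
    simp only [Pi.add_apply, mul_add, sum_add_distrib, h1, h2]
  · intro r x y _ _ h1
    simp only [Pi.smul_apply, smul_eq_mul, mul_assoc, ← mul_sum, h1]
  · intro r x y _ _ h1
    simp only [Pi.smul_apply, smul_eq_mul, mul_left_comm _ r, ← mul_sum, h1]

def indZ (A : Finset ℕ) (τ : Perm (Fin n)) : ℤ := if lp τ = A then 1 else 0

theorem conv_invZ {π π' : Perm (Fin n)} (h : lp π = lp π') (A B : Finset ℕ) :
    ∑ τ, indZ B (π * τ⁻¹) * indZ A τ = ∑ τ, indZ B (π' * τ⁻¹) * indZ A τ := by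
  have := conv_inv h (ind_mem B) (ind_mem A)
  have e : ∀ (S : Finset ℕ) (τ : Perm (Fin n)), ind S τ = ((indZ S τ : ℤ) : ℚ) := by
    intro S τ; unfold ind indZ; split_ifs <;> simp
  simp only [e] at this
  exact_mod_cast this

theorem card_pairs (π : Perm (Fin n)) (A B : Finset ℕ) :
    (Nat.card {p : Perm ℕ × Perm ℕ // IsSn n p.1 ∧ IsSn n p.2 ∧ p.1 * p.2 = iota n π ∧
      leftPeaks n p.2 = A ∧ leftPeaks n p.1 = B} : ℤ) =
    ∑ τ, indZ B (π * τ⁻¹) * indZ A τ := by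
  have h1 : ∑ τ, indZ B (π * τ⁻¹) * indZ A τ =
      (Nat.card {τ : Perm (Fin n) // lp (π * τ⁻¹) = B ∧ lp τ = A} : ℤ) := by
    rw [Nat.card_eq_fintype_card, Fintype.card_subtype, card_filter]
    push_cast
    apply sum_congr rfl
    intro τ _
    unfold indZ
    by_cases a : lp (π * τ⁻¹) = B <;> by_cases b : lp τ = A <;> simp [a, b]
  rw [h1]
  congr 1
  symm
  refine Nat.card_congr (Equiv.ofBijective (fun τ => ⟨(iota n (π * τ.1⁻¹), iota n τ.1),
    iota_fix _, iota_fix _, ?_, τ.2.2, τ.2.1⟩) ⟨?_, ?_⟩)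
  · rw [← map_mul]; simp
  · rintro ⟨τ, _⟩ ⟨τ', _⟩ h
    simp only [Subtype.mk.injEq, Prod.mk.injEq] at h
    exact Subtype.ext (iota_inj h.2)
  · rintro ⟨⟨σ, τ⟩, h1, h2, h3, h4, h5⟩
    obtain ⟨σ, rfl⟩ := iota_surj h1
    obtain ⟨τ, rfl⟩ := iota_surj h2
    simp only at h3 h4 h5
    rw [← map_mul] at h3
    have h6 := iota_inj h3
    have h7 : σ = π * τ⁻¹ := by rw [← h6]; simp
    subst h7
    exact ⟨⟨τ, h5, h4⟩, rfl⟩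

noncomputable def el (f : Perm (Fin n) → ℤ) : MonoidAlgebra ℤ (Perm ℕ) :=
  ∑ π, MonoidAlgebra.single (iota n π) (f π)

lemma el_coeff (f : Perm (Fin n) → ℤ) (π : Perm (Fin n)) :
    (el f).coeff (iota n π) = f π := by
  classical
  simp [el, MonoidAlgebra.coeff_sum, Finsupp.single_apply, iota_inj.eq_iff]

lemma el_mul (f g : Perm (Fin n) → ℤ) :
    el f * el g = el (fun π => ∑ τ, f (π * τ⁻¹) * g τ) := by
  unfold el
  rw [sum_mul_sum, sum_comm]
  have h1 : ∀ π : Perm (Fin n), MonoidAlgebra.single (iota n π) (∑ τ, f (π * τ⁻¹) * g τ) =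
      ∑ τ, MonoidAlgebra.single (iota n π) (f (π * τ⁻¹) * g τ) := by
    intro π
    exact map_sum (MonoidAlgebra.singleAddHom (iota n π)) _ _
  simp only [h1]
  rw [sum_comm (s := univ) (t := univ) (f := fun π τ =>
    MonoidAlgebra.single (iota n π) (f (π * τ⁻¹) * g τ))]
  apply sum_congr rfl
  intro τ _
  refine Fintype.sum_equiv (Equiv.mulRight τ) _ _ fun σ => ?_
  simp [MonoidAlgebra.single_mul_single]

lemma el_sum_smul {ι : Type*} (s : Finset ι) (z : ι → ℤ) (g : ι → Perm (Fin n) → ℤ) :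
    ∑ i ∈ s, z i • el (g i) = el (fun π => ∑ i ∈ s, z i * g i π) := by
  unfold el
  simp only [smul_sum]
  rw [sum_comm]
  apply sum_congr rfl
  intro π _
  rw [show MonoidAlgebra.single (iota n π) (∑ i ∈ s, z i * g i π) =
    ∑ i ∈ s, MonoidAlgebra.single (iota n π) (z i * g i π) from
    map_sum (MonoidAlgebra.singleAddHom (iota n π)) _ _]
  apply sum_congr rfl
  intro i _
  simp

lemma wI_eq (I : Finset ℕ) : wI n I = el (n := n) (indZ I) := by
  classical
  unfold wI el
  have h1 : {π : Perm ℕ | IsSn n π ∧ leftPeaks n π = I} =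
      ((univ.filter fun π : Perm (Fin n) => lp π = I).image (iota n) : Finset (Perm ℕ)) := by
    ext π
    simp only [Set.mem_ofPred_eq, coe_image, coe_filter, mem_univ, true_and, Set.mem_image]
    constructor
    · rintro ⟨a, b⟩
      obtain ⟨π₀, rfl⟩ := iota_surj a
      exact ⟨π₀, b, rfl⟩
    · rintro ⟨π₀, b, rfl⟩
      exact ⟨iota_fix _, b⟩
  rw [h1, finsum_mem_coe_finset, sum_image (iota_inj.injOn), sum_filter]
  apply sum_congr rfl
  intro π _
  unfold indZ
  split_ifs <;> simp

lemma span_eq : leftPeakSpan n = Submodule.span ℤ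
    (Set.range fun I : {I // I ∈ spm (n - 1)} => el (n := n) (indZ I.1)) := by
  unfold leftPeakSpan
  congr 1
  ext v
  simp only [Set.mem_ofPred_eq, Set.mem_range, Subtype.exists, mem_spm]
  constructor
  · rintro ⟨I, h1, h2, rfl⟩
    exact ⟨I, ⟨h1, h2⟩, (wI_eq I).symm⟩
  · rintro ⟨I, ⟨h1, h2⟩, rfl⟩
    exact ⟨I, h1, h2, (wI_eq I).symm⟩

lemma el_mem {f : Perm (Fin n) → ℤ} (h : ∀ π π', lp π = lp π' → f π = f π') :
    el f ∈ leftPeakSpan n := by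
  classical
  let z : Finset ℕ → ℤ := fun I => if h : ∃ π : Perm (Fin n), lp π = I then f h.choose else 0
  have hz : ∀ π, z (lp π) = f π := by
    intro π
    have hex : ∃ π' : Perm (Fin n), lp π' = lp π := ⟨π, rfl⟩
    simp only [z, dif_pos hex]
    exact h _ _ hex.choose_spec
  have : el f = ∑ I ∈ spm (n - 1), z I • el (n := n) (indZ I) := by
    rw [el_sum_smul]
    congr 1
    funext π
    simp [indZ, lp_mem, hz]
  rw [this, span_eq]
  exact Submodule.sum_mem _ fun I hI =>
    Submodule.smul_mem _ _ (Submodule.subset_span ⟨⟨I, hI⟩, rfl⟩)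

lemma mul_mem_span {x y : MonoidAlgebra ℤ (Perm ℕ)} (hx : x ∈ leftPeakSpan n)
    (hy : y ∈ leftPeakSpan n) : x * y ∈ leftPeakSpan n := by
  have h1 : leftPeakSpan n * leftPeakSpan n ≤ leftPeakSpan n := by
    conv_lhs => rw [span_eq, Submodule.span_mul_span]
    rw [Submodule.span_le]
    rintro _ ⟨_, ⟨I, rfl⟩, _, ⟨J, rfl⟩, rfl⟩
    simp only [el_mul]
    exact el_mem fun π π' h => conv_invZ h _ _
  exact h1 (Submodule.mul_mem_mul hx hy)

lemma linInd : LinearIndependent ℤ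
    (fun I : {I // I ∈ spm (n - 1)} => el (n := n) (indZ I.1)) := by
  classical
  rw [Fintype.linearIndependent_iff]
  intro g hg J
  obtain ⟨π, hπ⟩ := exists_lp J.2
  rw [el_sum_smul] at hg
  have := el_coeff (fun π => ∑ i, g i * indZ (n := n) i.1 π) π
  rw [hg] at this
  simp only [indZ, hπ, MonoidAlgebra.coeff_zero, Finsupp.coe_zero, Pi.zero_apply] at this
  rw [Finset.sum_eq_single J] at this
  · simpa using this.symm
  · intro I _ hI
    have : J.1 ≠ I.1 := fun h => hI (Subtype.ext h.symm)
    simp [this]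
  · simp

end LPA

/-- The left peak algebra: the number of factorizations `σ·τ = π` with prescribed left peak
sets `lPe(τ) = A`, `lPe(σ) = B` depends only on `lPe(π)`; consequently the span of the
`w_I` is a subalgebra of `ℤ[S_n]`, of dimension the Fibonacci number `f_n = Nat.fib (n+1)`. -/
theorem left_peak_algebra (n : ℕ) :
    (∀ π π' : Equiv.Perm ℕ, IsSn n π → IsSn n π' → leftPeaks n π = leftPeaks n π' →
      ∀ A B : Finset ℕ,
        Nat.card {p : Equiv.Perm ℕ × Equiv.Perm ℕ //
          IsSn n p.1 ∧ IsSn n p.2 ∧ p.1 * p.2 = π ∧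
            leftPeaks n p.2 = A ∧ leftPeaks n p.1 = B}
        = Nat.card {p : Equiv.Perm ℕ × Equiv.Perm ℕ //
          IsSn n p.1 ∧ IsSn n p.2 ∧ p.1 * p.2 = π' ∧
            leftPeaks n p.2 = A ∧ leftPeaks n p.1 = B}) ∧
    (∀ x ∈ leftPeakSpan n, ∀ y ∈ leftPeakSpan n, x * y ∈ leftPeakSpan n) ∧
    Module.finrank ℤ (leftPeakSpan n) = Nat.fib (n + 1) := by
  refine ⟨?_, fun x hx y hy => LPA.mul_mem_span hx hy, ?_⟩
  · intro π π' h h' heq A B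
    obtain ⟨π, rfl⟩ := LPA.iota_surj h
    obtain ⟨π', rfl⟩ := LPA.iota_surj h'
    have h1 := LPA.card_pairs π A B
    have h2 := LPA.card_pairs π' A B
    rw [LPA.conv_invZ heq, ← h2] at h1
    exact_mod_cast h1
  · rw [LPA.span_eq, finrank_span_eq_card LPA.linInd, Fintype.card_coe, LPA.sp_card]
end
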